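/- arXiv:2012.04816 — 6 statements merged into one kernel-verified Lean document; each statement's English description precedes it below -/
import Mathlib

section
/- Let G be a finite simple graph with connectivity κ(G) = k, let S be a minimum separating set of G (so |S| = k), and let F be an end of G to S with |V(F)| ≥ 2. Then the graph G[S] − V(F̄) is (k+1)-connected, where F̄ = G − (S ∪ V(F)) is the complementary fragment of F. -/
/-- A graph `G` is `k`-connected if it has at least `k+1` vertices and
deleting any set of fewer than `k` vertices leaves a connected graph. -/
def KConnected {V : Type*} (G : SimpleGraph V) (k : ℕ) : Prop :=
  k + 1 ≤ Nat.card V ∧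
    ∀ X : Finset V, X.card < k → (G.induce ((X : Set V)ᶜ)).Connected

/-- `G[S]`: the graph obtained from `G` by adding all edges between pairs of
vertices of `S`. -/
def addClique {V : Type*} (G : SimpleGraph V) (S : Set V) : SimpleGraph V :=
  G ⊔ SimpleGraph.fromRel fun a b => a ∈ S ∧ b ∈ S

/-- `F` is a fragment of `G` to `S`: a nonempty union of connected components
of `G - S` (i.e. a nonempty subset of `Sᶜ` with no edge to the rest of
`G - S`) such that `G - S - F` is nonempty. -/
def IsFragment {V : Type*} (G : SimpleGraph V) (S F : Set V) : Prop :=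
  F.Nonempty ∧ F ⊆ Sᶜ ∧ (Sᶜ \ F).Nonempty ∧
    ∀ u ∈ F, ∀ v ∈ Sᶜ \ F, ¬ G.Adj u v

theorem conn_of_cut {W : Type*} (H : SimpleGraph W) [Nonempty W]
    (h : ∀ A : Set W, A.Nonempty → Aᶜ.Nonempty → ∃ a ∈ A, ∃ b ∈ Aᶜ, H.Adj a b) :
    H.Connected := by
  refine ⟨fun u v => ?_⟩
  by_contra hv
  obtain ⟨a, ha, b, hb, hab⟩ := h {x | H.Reachable u x} ⟨u, SimpleGraph.Reachable.refl u⟩ ⟨v, hv⟩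
  exact hb (SimpleGraph.Reachable.trans ha hab.reachable)

theorem cut_of_conn {W : Type*} (H : SimpleGraph W) (hc : H.Connected)
    (A : Set W) (hA : A.Nonempty) (hB : Aᶜ.Nonempty) : ∃ a ∈ A, ∃ b ∈ Aᶜ, H.Adj a b := by
  obtain ⟨u, hu⟩ := hA
  obtain ⟨v, hv⟩ := hB
  obtain ⟨p⟩ := hc.preconnected u v
  obtain ⟨d, _, h1, h2⟩ := p.exists_boundary_dart A hu hv
  exact ⟨d.fst, h1, d.snd, h2, d.adj⟩

theorem core_cut {V : Type*} [Fintype V] (G : SimpleGraph V) (k : ℕ)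
    (hκ₁ : KConnected G k)
    (S F : Set V) (hS : S.ncard = k)
    (hF : IsFragment G S F)
    (hend : ∀ S' F' : Set V, S'.ncard = k → ¬ (G.induce (S'ᶜ)).Connected →
      IsFragment G S' F' → F' ⊆ F → F' = F)
    (X A B : Set V) (hX : X.ncard ≤ k) (hXs : X ⊆ S ∪ F) (hAF : A ⊆ F) (hBs : B ⊆ S ∪ F)
    (hcov : S ∪ F ⊆ X ∪ A ∪ B) (hAX : Disjoint A X) (hBX : Disjoint B X) (hAB : Disjoint A B)
    (hA : A.Nonempty) (hB : B.Nonempty) (hadj : ∀ a ∈ A, ∀ b ∈ B, ¬ G.Adj a b) : False := by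
  classical
  obtain ⟨hF0, hFS, ⟨z, hzS, hzF⟩, hFadj⟩ := hF
  rw [Set.disjoint_left] at hAX hBX hAB
  have hzX : z ∉ X := fun h => (hXs h).elim hzS hzF
  have hzA : z ∉ A := fun h => hzF (hAF h)
  have hno : ∀ u ∈ A, ∀ v ∈ Xᶜ \ A, ¬ G.Adj u v := by
    intro u hu v ⟨hvX, hvA⟩ huv
    by_cases hv : v ∈ S ∪ F
    · rcases hcov hv with (h | h) | h
      · exact hvX h
      · exact hvA h
      · exact hadj u hu v h huv
    · exact hFadj u (hAF hu) v ⟨fun h => hv (Or.inl h), fun h => hv (Or.inr h)⟩ huv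
  have hdis : ¬ (G.induce (Xᶜ)).Connected := by
    intro hc
    obtain ⟨a0, ha0⟩ := hA
    obtain ⟨a, ha, b, hb, hab⟩ := cut_of_conn _ hc (Subtype.val ⁻¹' A) ⟨⟨a0, hAX ha0⟩, ha0⟩
      ⟨⟨z, hzX⟩, hzA⟩
    exact hno a ha b ⟨b.2, hb⟩ hab
  have hXk : X.ncard = k := by
    by_contra hne
    have := hκ₁.2 X.toFinset (by rw [← Set.ncard_eq_toFinset_card']; omega)
    rw [Set.coe_toFinset] at this
    exact hdis this
  have hAeq : A = F := hend X A hXk hdis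
    ⟨hA, fun a ha => hAX ha, ⟨z, hzX, hzA⟩, hno⟩ hAF
  subst hAeq
  have hXS : X ⊆ S := fun x hx => (hXs hx).elim id fun h => absurd hx (hAX h)
  have hXeq : X = S := Set.eq_of_subset_of_ncard_le hXS (by omega)
  obtain ⟨b, hb⟩ := hB
  rcases hBs hb with h | h
  · exact hBX hb (hXeq ▸ h)
  · exact hAB h hb

/-- If `κ(G) = k`, `S` is a minimum separating set of `G` and `F` is an end
of `G` to `S` with `|F| ≥ 2`, then `G[S] - V(F̄)` (the graph induced on
`S ∪ F` after completing `S`) is `(k+1)`-connected. -/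
theorem stmt_2 {V : Type*} [Fintype V] (G : SimpleGraph V) (k : ℕ)
    (hκ₁ : KConnected G k) (hκ₂ : ¬ KConnected G (k + 1))
    (S F : Set V) (hsep : ¬ (G.induce (Sᶜ)).Connected) (hS : S.ncard = k)
    (hF : IsFragment G S F)
    (hend : ∀ S' F' : Set V, S'.ncard = k → ¬ (G.induce (S'ᶜ)).Connected →
      IsFragment G S' F' → F' ⊆ F → F' = F)
    (hF2 : 2 ≤ F.ncard) :
    KConnected ((addClique G S).induce (S ∪ F)) (k + 1) := by
  classical
  have hdSF : Disjoint S F := Set.disjoint_left.2 fun x hx hf => hF.2.1 hf hx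
  have hcard : Nat.card ↥(S ∪ F) = k + F.ncard := by
    rw [Nat.card_coe_set_eq, Set.ncard_union_eq hdSF, hS]
  refine ⟨by omega, fun X hX => ?_⟩
  have hne : Nonempty ↥((X : Set ↥(S ∪ F))ᶜ) := by
    by_contra h
    have h1 : ∀ x, x ∈ X := fun x => by
      by_contra hx
      exact h ⟨⟨x, hx⟩⟩
    have h2 : X = Finset.univ := Finset.eq_univ_iff_forall.2 h1
    rw [h2, Finset.card_univ, ← Nat.card_eq_fintype_card] at hX
    omega
  refine conn_of_cut _ fun A hA hB => ?_
  by_contra hcon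
  push Not at hcon
  let f : ↥((X : Set ↥(S ∪ F))ᶜ) → V := fun x => x.1.1
  have hf : Function.Injective f := fun x y h => Subtype.ext (Subtype.ext h)
  let X' : Set V := Subtype.val '' (X : Set ↥(S ∪ F))
  have hX' : X'.ncard ≤ k := by
    have : X'.ncard = X.card := by
      rw [Set.ncard_image_of_injective _ Subtype.val_injective, Set.ncard_coe_finset]
    omega
  have hXs : X' ⊆ S ∪ F := by
    rintro _ ⟨x, _, rfl⟩
    exact x.2
  have hsub : ∀ C, f '' C ⊆ S ∪ F := by
    rintro C _ ⟨x, _, rfl⟩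
    exact x.1.2
  have hdX : ∀ C, Disjoint (f '' C) X' := by
    intro C
    rw [Set.disjoint_left]
    rintro _ ⟨x, _, rfl⟩ ⟨y, hy, hxy⟩
    have : y = x.1 := Subtype.ext hxy
    exact x.2 (this ▸ hy)
  have hdAB : Disjoint (f '' A) (f '' Aᶜ) :=
    (Set.disjoint_image_iff hf).2 disjoint_compl_right
  have hcov : S ∪ F ⊆ X' ∪ f '' A ∪ f '' Aᶜ := by
    intro v hv
    by_cases h : (⟨v, hv⟩ : ↥(S ∪ F)) ∈ X
    · exact Or.inl (Or.inl ⟨_, h, rfl⟩)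
    · by_cases h' : (⟨⟨v, hv⟩, h⟩ : ↥((X : Set ↥(S ∪ F))ᶜ)) ∈ A
      · exact Or.inl (Or.inr ⟨_, h', rfl⟩)
      · exact Or.inr ⟨_, h', rfl⟩
  have hadj : ∀ a ∈ f '' A, ∀ b ∈ f '' Aᶜ, ¬ (addClique G S).Adj a b := by
    rintro _ ⟨a, ha, rfl⟩ _ ⟨b, hb, rfl⟩
    exact hcon a ha b hb
  have hadjG : ∀ a ∈ f '' A, ∀ b ∈ f '' Aᶜ, ¬ G.Adj a b :=
    fun a ha b hb h => hadj a ha b hb (Or.inl h)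
  by_cases hAS : f '' A ⊆ F
  · exact core_cut G k hκ₁ S F hS hF hend X' _ _ hX' hXs hAS (hsub _) hcov (hdX _) (hdX _) hdAB
      (hA.image f) (hB.image f) hadjG
  · have hBS : f '' Aᶜ ⊆ F := by
      intro b hb
      refine (hsub _ hb).elim (fun hbS => ?_) id
      rw [Set.not_subset] at hAS
      obtain ⟨a, ha, haF⟩ := hAS
      have haS : a ∈ S := (hsub _ ha).resolve_right haF
      have hne : a ≠ b := fun h => Set.disjoint_left.1 hdAB ha (h ▸ hb)
      exact absurd (Or.inr ⟨hne, Or.inl ⟨haS, hbS⟩⟩) (hadj a ha b hb)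
    refine core_cut G k hκ₁ S F hS hF hend X' _ _ hX' hXs hBS (hsub A) ?_ (hdX _) (hdX _)
      hdAB.symm (hB.image f) (hA.image f) fun a ha b hb h => hadjG b hb a ha h.symm
    rwa [Set.union_right_comm]
end

section
/- Let G be a k-connected finite simple graph and let S be a separating set of G with |S| = k. Then for every fragment F of G to S, the graph G[S] − V(F) is k-connected. -/
/-- If `G` is `k`-connected, `S` is a separating set with `|S| = k`, and `F`
is a fragment of `G` to `S`, then `G[S] - V(F)` is `k`-connected. -/
theorem stmt_3 {V : Type*} [Fintype V] (G : SimpleGraph V) (k : ℕ)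
    (hG : KConnected G k)
    (S F : Set V) (hsep : ¬ (G.induce (Sᶜ)).Connected) (hS : S.ncard = k)
    (hF : IsFragment G S F) :
    KConnected ((addClique G S).induce (Fᶜ)) k := by
  classical
  obtain ⟨hFn, hFS, ⟨w, hwS, hwF⟩, hno⟩ := hF
  have hSF : S ⊆ Fᶜ := fun x hx hxF => hFS hxF hx
  refine ⟨?_, ?_⟩
  · have h1 : (insert w S).ncard = S.ncard + 1 := Set.ncard_insert_of_notMem hwS
    have h2 : insert w S ⊆ Fᶜ := Set.insert_subset hwF hSF
    have h3 := Set.ncard_le_ncard h2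
    have h4 : Nat.card (Fᶜ : Set V) = (Fᶜ : Set V).ncard := rfl
    omega
  · intro X hX
    set X' : Finset V := X.map (Function.Embedding.subtype _) with hX'
    have hc : X'.card < k := by simpa [hX'] using hX
    have hconn := hG.2 X' hc
    obtain ⟨s, hsS, hsX⟩ : ∃ s ∈ S, s ∉ X' := by
      by_contra! hcon
      have h1 : S ⊆ (X' : Set V) := fun x hx => hcon x hx
      have h2 := Set.ncard_le_ncard h1
      rw [Set.ncard_coe_finset] at h2
      omega
    have hmem : ∀ v (hv : v ∈ Fᶜ), v ∉ X' → (⟨v, hv⟩ : (Fᶜ : Set V)) ∈ ((X : Set (Fᶜ : Set V))ᶜ) := by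
      intro v hv hvX hx
      apply hvX
      rw [hX', Finset.mem_map]
      exact ⟨⟨v, hv⟩, hx, rfl⟩
    have key : ∀ (a b : ((X' : Set V)ᶜ : Set V)) (p : (G.induce ((X' : Set V)ᶜ)).Walk a b),
        b.1 = s → ∀ ha : a.1 ∈ Fᶜ,
        (((addClique G S).induce (Fᶜ)).induce ((X : Set (Fᶜ : Set V))ᶜ)).Reachable
          ⟨⟨a.1, ha⟩, hmem _ ha a.2⟩ ⟨⟨s, hSF hsS⟩, hmem _ (hSF hsS) hsX⟩ := by
      intro a b p
      induction p with
      | nil =>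
        rintro rfl ha
        exact SimpleGraph.Reachable.refl _
      | @cons u v w' huv p ih =>
        intro hb ha
        by_cases huS : u.1 ∈ S
        · by_cases hus : u.1 = s
          · subst hus
            exact SimpleGraph.Reachable.refl _
          · apply SimpleGraph.Adj.reachable
            simp [addClique, SimpleGraph.fromRel_adj, hus, huS, hsS]
        · have hv : v.1 ∈ Fᶜ := fun hvF => hno v.1 hvF u.1 ⟨huS, ha⟩ huv.symm
          refine SimpleGraph.Reachable.trans (SimpleGraph.Adj.reachable ?_) (ih hb hv)
          exact Or.inl huv
    have hall : ∀ x : ((X : Set (Fᶜ : Set V))ᶜ : Set (Fᶜ : Set V)),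
        (((addClique G S).induce (Fᶜ)).induce ((X : Set (Fᶜ : Set V))ᶜ)).Reachable
          x ⟨⟨s, hSF hsS⟩, hmem _ (hSF hsS) hsX⟩ := by
      rintro ⟨⟨x, hxF⟩, hxX⟩
      have hx' : x ∉ X' := by
        intro h
        rw [hX', Finset.mem_map] at h
        obtain ⟨y, hy, hyx⟩ := h
        apply hxX
        have : y = ⟨x, hxF⟩ := Subtype.ext hyx
        rw [← this]
        exact hy
      obtain ⟨p⟩ := hconn.preconnected ⟨x, hx'⟩ ⟨s, hsX⟩
      exact key _ _ p rfl hxF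
    haveI : Nonempty ((X : Set (Fᶜ : Set V))ᶜ : Set (Fᶜ : Set V)) :=
      ⟨⟨⟨s, hSF hsS⟩, hmem _ (hSF hsS) hsX⟩⟩
    exact SimpleGraph.Connected.mk fun x y => (hall x).trans (hall y).symm
end

section
/- Let G be a k-connected finite simple graph with minimum degree δ(G) ≥ ⌊3k/2⌋ + m − 1, let S be a separating set of G with |S| = k, and let F be a fragment of G to S. If W is a subgraph of G − (S ∪ V(F)) of order at most m and the graph G[S] − V(F ∪ W) is k-connected, then G − V(W) is k-connected. -/
lemma aux_cut {T : Type*} (G : SimpleGraph T) (P : Set T) (hc : G.Connected)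
    (hP : P.Nonempty) (hQ : Pᶜ.Nonempty) (h : ∀ u ∈ P, ∀ v ∈ Pᶜ, ¬ G.Adj u v) : False := by
  obtain ⟨p, hp⟩ := hP
  obtain ⟨q, hq⟩ := hQ
  obtain ⟨w⟩ := hc.preconnected p q
  have key : ∀ {x y : T} (w : G.Walk x y), x ∈ P → y ∈ P := by
    intro x y w
    induction w with
    | nil => exact id
    | cons hadj _ ih =>
      intro hx
      apply ih
      by_contra hy
      exact h _ hx _ hy hadj
  exact hq (key w hp)

lemma aux_split {T : Type*} [Nonempty T] (G : SimpleGraph T) (hc : ¬ G.Connected) :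
    ∃ P : Set T, P.Nonempty ∧ Pᶜ.Nonempty ∧ ∀ u ∈ P, ∀ v ∈ Pᶜ, ¬ G.Adj u v := by
  have : ¬ G.Preconnected := fun h => hc ⟨h⟩
  unfold SimpleGraph.Preconnected at this
  push Not at this
  obtain ⟨u, v, huv⟩ := this
  refine ⟨{x | G.Reachable u x}, ⟨u, SimpleGraph.Reachable.refl u⟩, ⟨v, huv⟩, ?_⟩
  intro x hx y hy hadj
  exact hy (SimpleGraph.Reachable.trans hx hadj.reachable)

lemma aux_kc {T : Type*} [DecidableEq T] (G : SimpleGraph T) (k : ℕ) (h : KConnected G k)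
    (P Q Y : Finset T) (hcov : ∀ v, v ∈ P ∨ v ∈ Q ∨ v ∈ Y)
    (hPY : ∀ v ∈ P, v ∉ Y) (hQY : ∀ v ∈ Q, v ∉ Y) (hPQ : ∀ v ∈ P, v ∉ Q)
    (hP : P.Nonempty) (hQ : Q.Nonempty) (hadj : ∀ u ∈ P, ∀ v ∈ Q, ¬ G.Adj u v) :
    k ≤ Y.card := by
  by_contra hlt
  have hc := h.2 Y (by omega)
  obtain ⟨p, hp⟩ := hP
  obtain ⟨q, hq⟩ := hQ
  refine aux_cut _ {x : ((Y : Set T)ᶜ : Set T) | (x : T) ∈ P} hc ⟨⟨p, by simpa using hPY p hp⟩, hp⟩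
    ⟨⟨q, by simpa using hQY q hq⟩, fun h' => hPQ q h' hq⟩ ?_
  rintro ⟨u, hu⟩ hu' ⟨v, hv⟩ hv' ha
  have hv2 : v ∉ P := hv'
  have hv3 : v ∉ Y := by simpa using hv
  have : v ∈ Q := by
    rcases hcov v with h | h | h
    · exact absurd h hv2
    · exact h
    · exact absurd h hv3
  exact hadj u hu' v this ha

lemma aux_kc_ind {T : Type*} [DecidableEq T] (G : SimpleGraph T) (U : Set T) (k : ℕ)
    (h : KConnected (G.induce U) k)
    (P Q Y : Finset T) (hcov : ∀ v ∈ U, v ∈ P ∨ v ∈ Q ∨ v ∈ Y)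
    (hPU : ∀ v ∈ P, v ∈ U) (hQU : ∀ v ∈ Q, v ∈ U)
    (hPY : ∀ v ∈ P, v ∉ Y) (hQY : ∀ v ∈ Q, v ∉ Y) (hPQ : ∀ v ∈ P, v ∉ Q)
    (hP : P.Nonempty) (hQ : Q.Nonempty) (hadj : ∀ u ∈ P, ∀ v ∈ Q, ¬ G.Adj u v) :
    k ≤ Y.card := by
  classical
  obtain ⟨p, hp⟩ := hP
  obtain ⟨q, hq⟩ := hQ
  have := aux_kc (G.induce U) k h (P.subtype (· ∈ U)) (Q.subtype (· ∈ U)) (Y.subtype (· ∈ U))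
    (by rintro ⟨v, hv⟩; simpa using hcov v hv)
    (by rintro ⟨v, hv⟩; simpa using hPY v)
    (by rintro ⟨v, hv⟩; simpa using hQY v)
    (by rintro ⟨v, hv⟩; simpa using hPQ v)
    ⟨⟨p, hPU p hp⟩, by simpa using hp⟩ ⟨⟨q, hQU q hq⟩, by simpa using hq⟩
    (by rintro ⟨u, hu⟩ hu' ⟨v, hv⟩ hv'
        have := hadj u (by simpa using hu') v (by simpa using hv')
        simpa using this)
  refine this.trans ?_
  rw [Finset.card_subtype]
  exact Finset.card_filter_le _ _

/-- the cut property for `G` -/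
def CutG {V : Type*} (G : SimpleGraph V) (k : ℕ) : Prop :=
  ∀ P Q Y : Finset V, (∀ v, v ∈ P ∨ v ∈ Q ∨ v ∈ Y) →
    (∀ v ∈ P, v ∉ Y) → (∀ v ∈ Q, v ∉ Y) → (∀ v ∈ P, v ∉ Q) → P.Nonempty → Q.Nonempty →
    (∀ u ∈ P, ∀ v ∈ Q, ¬ G.Adj u v) → k ≤ Y.card

/-- the cut property for the completed graph -/
def CutH {V : Type*} (G : SimpleGraph V) (S F W : Finset V) (k : ℕ) : Prop :=
  ∀ P Q Y : Finset V, (∀ v, v ∉ F → v ∉ W → v ∈ P ∨ v ∈ Q ∨ v ∈ Y) →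
    (∀ v ∈ P, v ∉ F ∧ v ∉ W) → (∀ v ∈ Q, v ∉ F ∧ v ∉ W) →
    (∀ v ∈ P, v ∉ Y) → (∀ v ∈ Q, v ∉ Y) → (∀ v ∈ P, v ∉ Q) → P.Nonempty → Q.Nonempty →
    (∀ u ∈ P, ∀ v ∈ Q, ¬ G.Adj u v ∧ ¬ (u ∈ S ∧ v ∈ S)) → k ≤ Y.card

/-- the configuration -/
structure Cfg {V : Type*} [Fintype V] [DecidableEq V] (G : SimpleGraph V)
    (k : ℕ) (S F W A B X : Finset V) : Prop where
  cG : CutG G k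
  cH : CutH G S F W k
  hS : S.card = k
  hX : X.card < k
  SF : ∀ v ∈ S, v ∉ F
  SW : ∀ v ∈ S, v ∉ W
  FW : ∀ v ∈ F, v ∉ W
  cov : ∀ v, v ∈ A ∨ v ∈ B ∨ v ∈ X ∨ v ∈ W
  AB : ∀ v ∈ A, v ∉ B
  AX : ∀ v ∈ A, v ∉ X
  AW : ∀ v ∈ A, v ∉ W
  BX : ∀ v ∈ B, v ∉ X
  BW : ∀ v ∈ B, v ∉ W
  XW : ∀ v ∈ X, v ∉ W
  hA : A.Nonempty
  hB : B.Nonempty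
  adj : ∀ u ∈ A, ∀ v ∈ B, ¬ G.Adj u v
  frag : ∀ u ∈ F, ∀ v, v ∉ S → v ∉ F → ¬ G.Adj u v
  Fne : F.Nonempty
  Rne : ∃ v, v ∉ S ∧ v ∉ F

section

variable {V : Type*} [Fintype V] [DecidableEq V] {G : SimpleGraph V}
    {k : ℕ} {S F W A B X : Finset V}

lemma Cfg.symm (h : Cfg G k S F W A B X) : Cfg G k S F W B A X where
  cG := h.cG
  cH := h.cH
  hS := h.hS
  hX := h.hX
  SF := h.SF
  SW := h.SW
  FW := h.FW
  cov v := by have := h.cov v; tauto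
  AB v hv hv' := h.AB v hv' hv
  AX := h.BX
  AW := h.BW
  BX := h.AX
  BW := h.AW
  XW := h.XW
  hA := h.hB
  hB := h.hA
  adj u hu v hv ha := h.adj v hv u hu ha.symm
  frag := h.frag
  Fne := h.Fne
  Rne := h.Rne

lemma Cfg.meets (h : Cfg G k S F W A B X) : (B ∩ S).Nonempty := by
  by_contra hne
  have hSB : ∀ s ∈ S, s ∉ B := fun s hs hb => hne ⟨s, by simp [hs, hb]⟩
  obtain ⟨s, hs, hsX⟩ : ∃ s ∈ S, s ∉ X := by
    by_contra hcon
    push Not at hcon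
    have := Finset.card_le_card (show S ⊆ X from hcon)
    have := h.hX
    have := h.hS
    omega
  have hsA : s ∈ A := by
    have := h.cov s
    have := hSB s hs
    have := h.SW s hs
    tauto
  have hX := h.hX
  by_cases hBF : (B \ F).Nonempty
  · have := h.cH (A \ F) (B \ F) X
      (by intro v hF hW; have := h.cov v; simp only [Finset.mem_sdiff]; tauto)
      (by intro v hv; have := h.AW v; simp only [Finset.mem_sdiff] at hv; tauto)
      (by intro v hv; have := h.BW v; simp only [Finset.mem_sdiff] at hv; tauto)
      (by intro v hv; have := h.AX v; simp only [Finset.mem_sdiff] at hv; tauto)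
      (by intro v hv; have := h.BX v; simp only [Finset.mem_sdiff] at hv; tauto)
      (by intro v hv; have := h.AB v; simp only [Finset.mem_sdiff] at hv ⊢; tauto)
      ⟨s, by simp [hsA, h.SF s hs]⟩ hBF
      (by intro u hu v hv
          simp only [Finset.mem_sdiff] at hu hv
          exact ⟨h.adj u hu.1 v hv.1, fun hh => hSB v hh.2 hv.1⟩)
    omega
  · have hBF' : ∀ v ∈ B, v ∈ F := by
      intro v hv
      by_contra hF
      exact hBF ⟨v, by simp [hv, hF]⟩
    have := h.cG B (A ∪ W) X
      (by intro v; have := h.cov v; simp only [Finset.mem_union]; tauto)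
      h.BX
      (by intro v hv; have := h.AX v; have := h.XW v; simp only [Finset.mem_union] at hv; tauto)
      (by intro v hv; have := h.AB v; have := h.BW v; simp only [Finset.mem_union]; tauto)
      h.hB ⟨s, by simp [hsA]⟩
      (by intro u hu v hv
          simp only [Finset.mem_union] at hv
          rcases hv with hv | hv
          · exact fun ha => h.adj v hv u hu ha.symm
          · exact h.frag u (hBF' u hu) v (fun hs => h.SW v hs hv) (fun hf => h.FW v hf hv))
    omega

/-- if `A` meets `F` -/
lemma Cfg.cutF (h : Cfg G k S F W A B X) (hAF : (A ∩ F).Nonempty) :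
    k ≤ (X ∩ F).card + (A ∩ S).card + (X ∩ S).card := by
  have hb := h.meets
  have := h.cG (A ∩ F) (Finset.univ \ ((A ∩ F) ∪ ((X ∩ F) ∪ (A ∩ S) ∪ (X ∩ S))))
    ((X ∩ F) ∪ (A ∩ S) ∪ (X ∩ S))
    (by intro v; simp only [Finset.mem_union, Finset.mem_sdiff, Finset.mem_univ]; tauto)
    (by intro v hv; have := h.AX v; have := h.SF v
        simp only [Finset.mem_union, Finset.mem_inter] at hv ⊢; tauto)
    (by intro v; simp only [Finset.mem_union, Finset.mem_sdiff, Finset.mem_univ]; tauto)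
    (by intro v; simp only [Finset.mem_union, Finset.mem_sdiff, Finset.mem_univ]; tauto)
    hAF
    (by obtain ⟨s, hs⟩ := hb
        have := h.AB s; have := h.BX s; have := h.SF s
        refine ⟨s, ?_⟩
        simp only [Finset.mem_union, Finset.mem_sdiff, Finset.mem_univ, Finset.mem_inter] at hs ⊢
        tauto)
    (by intro u hu v hv ha
        have h1 := h.cov v; have h2 := h.frag u; have h3 := h.adj u
        have h4 := h.SW v; have h5 := h.FW v
        simp only [Finset.mem_union, Finset.mem_sdiff, Finset.mem_univ, Finset.mem_inter] at hu hv
        have h6 := fun hs hf => h2 hu.2 v hs hf ha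
        have h7 := fun hs => h3 hu.1 v hs ha
        tauto)
  have c1 := Finset.card_union_le ((X ∩ F) ∪ (A ∩ S)) (X ∩ S)
  have c2 := Finset.card_union_le (X ∩ F) (A ∩ S)
  omega

lemma Cfg.cutR (h : Cfg G k S F W A B X) (hAF : (A \ (S ∪ F)).Nonempty) :
    k ≤ (X \ (S ∪ F)).card + (A ∩ S).card + (X ∩ S).card := by
  have hb := h.meets
  have := h.cH (A \ (S ∪ F))
    (Finset.univ \ ((A \ (S ∪ F)) ∪ (F ∪ W) ∪ ((X \ (S ∪ F)) ∪ (A ∩ S) ∪ (X ∩ S))))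
    ((X \ (S ∪ F)) ∪ (A ∩ S) ∪ (X ∩ S))
    (by intro v; simp only [Finset.mem_union, Finset.mem_sdiff, Finset.mem_univ]; tauto)
    (by intro v hv; have := h.AW v
        simp only [Finset.mem_union, Finset.mem_sdiff] at hv ⊢; tauto)
    (by intro v; simp only [Finset.mem_union, Finset.mem_sdiff, Finset.mem_univ]; tauto)
    (by intro v hv; have := h.AX v; have := h.SF v
        simp only [Finset.mem_union, Finset.mem_inter, Finset.mem_sdiff] at hv ⊢; tauto)
    (by intro v; simp only [Finset.mem_union, Finset.mem_sdiff, Finset.mem_univ]; tauto)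
    (by intro v; simp only [Finset.mem_union, Finset.mem_sdiff, Finset.mem_univ]; tauto)
    hAF
    (by obtain ⟨s, hs⟩ := hb
        have := h.AB s; have := h.BX s; have := h.SF s; have := h.SW s
        refine ⟨s, ?_⟩
        simp only [Finset.mem_union, Finset.mem_sdiff, Finset.mem_univ, Finset.mem_inter] at hs ⊢
        tauto)
    (by intro u hu v hv
        simp only [Finset.mem_union, Finset.mem_sdiff, Finset.mem_univ, Finset.mem_inter] at hu hv
        refine ⟨fun ha => ?_, fun hh => hu.2 (Or.inl hh.1)⟩
        have h1 := h.cov v; have h3 := h.adj u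
        have h7 := fun hs => h3 hu.1 v hs ha
        tauto)
  have c1 := Finset.card_union_le ((X \ (S ∪ F)) ∪ (A ∩ S)) (X ∩ S)
  have c2 := Finset.card_union_le (X \ (S ∪ F)) (A ∩ S)
  omega

lemma aux_deg [DecidableRel G.Adj] (v : V) (N : Finset V) (hv : v ∈ N)
    (h : ∀ u, G.Adj v u → u ∈ N) : G.degree v + 1 ≤ N.card := by
  rw [← SimpleGraph.card_neighborFinset_eq_degree]
  have : insert v (G.neighborFinset v) ⊆ N := by
    intro u hu
    simp only [Finset.mem_insert, SimpleGraph.mem_neighborFinset] at hu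
    rcases hu with rfl | hu
    · exact hv
    · exact h u hu
  have h2 := Finset.card_le_card this
  rwa [Finset.card_insert_of_notMem (by simp)] at h2

lemma Cfg.main [DecidableRel G.Adj] (h : Cfg G k S F W A B X) (m : ℕ) (hW : W.card ≤ m)
    (hδ : ∀ v : V, 3 * k / 2 + m - 1 ≤ G.degree v)
    (hab : (B ∩ S).card ≤ (A ∩ S).card) : False := by
  have hb1 : 1 ≤ (B ∩ S).card := h.meets.card_pos
  have hX := h.hX
  have hsum : (A ∩ S).card + (B ∩ S).card + (X ∩ S).card = k := by
    rw [← h.hS, ← Finset.card_union_of_disjoint, ← Finset.card_union_of_disjoint]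
    · congr 1
      ext v
      have := h.cov v; have := h.SW v
      simp only [Finset.mem_union, Finset.mem_inter]
      tauto
    · rw [Finset.disjoint_left]; intro v
      have := h.AX v; have := h.BX v
      simp only [Finset.mem_union, Finset.mem_inter]
      tauto
    · rw [Finset.disjoint_left]; intro v
      have := h.AB v
      simp only [Finset.mem_inter]
      tauto
  have hxsum : (X ∩ F).card + (X ∩ S).card + (X \ (S ∪ F)).card = X.card := by
    rw [← Finset.card_union_of_disjoint, ← Finset.card_union_of_disjoint]
    · congr 1
      ext v
      simp only [Finset.mem_union, Finset.mem_inter, Finset.mem_sdiff]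
      tauto
    · rw [Finset.disjoint_left]; intro v
      simp only [Finset.mem_union, Finset.mem_inter, Finset.mem_sdiff]
      tauto
    · rw [Finset.disjoint_left]; intro v
      have := h.SF v
      simp only [Finset.mem_inter]
      tauto
  by_cases hBF : (B ∩ F).Nonempty
  · have e1 := h.symm.cutF hBF
    by_cases hBR : (B \ (S ∪ F)).Nonempty
    · have e2 := h.symm.cutR hBR
      omega
    · by_cases hAR : (A \ (S ∪ F)).Nonempty
      · have e2 := h.cutR hAR
        omega
      · obtain ⟨v, hvS, hvF⟩ := h.Rne
        have hR : ∀ u, u ∉ S → u ∉ F → u ∈ X ∨ u ∈ W := by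
          intro u hS hF
          rcases h.cov u with hu | hu | hu | hu
          · exact absurd ⟨u, by simp [hu, hS, hF]⟩ hAR
          · exact absurd ⟨u, by simp [hu, hS, hF]⟩ hBR
          · exact Or.inl hu
          · exact Or.inr hu
        have hd := aux_deg (G := G) v ((X \ (S ∪ F)) ∪ W ∪ S)
          (by have := hR v
              simp only [Finset.mem_union, Finset.mem_sdiff]
              tauto)
          (by intro u hu
              have h1 := hR u
              have h2 : u ∉ F := fun hf => h.frag u hf v hvS hvF hu.symm
              simp only [Finset.mem_union, Finset.mem_sdiff]
              tauto)
        have c1 := Finset.card_union_le ((X \ (S ∪ F)) ∪ W) S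
        have c2 := Finset.card_union_le (X \ (S ∪ F)) W
        have := hδ v
        have := h.hS
        omega
  · by_cases hBR : (B \ (S ∪ F)).Nonempty
    · have e1 := h.symm.cutR hBR
      by_cases hAF : (A ∩ F).Nonempty
      · have e2 := h.cutF hAF
        omega
      · obtain ⟨v, hv⟩ := h.Fne
        have hR : ∀ u, u ∈ F → u ∈ X := by
          intro u hF
          rcases h.cov u with hu | hu | hu | hu
          · exact absurd ⟨u, by simp [hu, hF]⟩ hAF
          · exact absurd ⟨u, by simp [hu, hF]⟩ hBF
          · exact hu
          · exact absurd hu (h.FW u hF)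
        have hd := aux_deg (G := G) v ((X ∩ F) ∪ S)
          (by simp [hv, hR v hv])
          (by intro u hu
              have h1 := hR u
              have h2 := fun hs hf => h.frag v hv u hs hf hu
              simp only [Finset.mem_union, Finset.mem_inter]
              tauto)
        have c1 := Finset.card_union_le (X ∩ F) S
        have := hδ v
        have := h.hS
        omega
    · obtain ⟨v, hv⟩ := h.meets
      have hBS : ∀ u ∈ B, u ∈ S := by
        intro u hu
        by_contra hS
        by_cases hF : u ∈ F
        · exact hBF ⟨u, by simp [hu, hF]⟩
        · exact hBR ⟨u, by simp [hu, hS, hF]⟩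
      have hd := aux_deg (G := G) v ((B ∩ S) ∪ X ∪ W)
        (by simp only [Finset.mem_union]; tauto)
        (by intro u hu
            have h1 := h.cov u
            have h2 : u ∉ A := fun ha => h.adj u ha v (Finset.mem_inter.1 hv).1 hu.symm
            have h3 := hBS u
            simp only [Finset.mem_union, Finset.mem_inter]
            tauto)
      have c1 := Finset.card_union_le ((B ∩ S) ∪ X) W
      have c2 := Finset.card_union_le (B ∩ S) X
      have := hδ v
      omega

lemma Cfg.false [DecidableRel G.Adj] (h : Cfg G k S F W A B X) (m : ℕ) (hW : W.card ≤ m)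
    (hδ : ∀ v : V, 3 * k / 2 + m - 1 ≤ G.degree v) : False := by
  rcases le_total (B ∩ S).card (A ∩ S).card with hab | hab
  · exact h.main m hW hδ hab
  · exact h.symm.main m hW hδ hab

end

/-- Let `G` be `k`-connected with `δ(G) ≥ ⌊3k/2⌋ + m - 1`, `S` a separating
set with `|S| = k`, and `F` a fragment of `G` to `S`. If `W ⊆ G - (S ∪ V(F))`
has order at most `m` and `G[S] - V(F ∪ W)` is `k`-connected, then `G - V(W)`
is `k`-connected. -/
theorem stmt_4 {V : Type*} [Fintype V] [DecidableEq V] (G : SimpleGraph V)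
    [DecidableRel G.Adj] (k m : ℕ)
    (hG : KConnected G k)
    (hδ : ∀ v : V, 3 * k / 2 + m - 1 ≤ G.degree v)
    (S F : Set V) (hsep : ¬ (G.induce (Sᶜ)).Connected) (hS : S.ncard = k)
    (hF : IsFragment G S F)
    (W : Set V) (hW : W ⊆ (S ∪ F)ᶜ) (hWcard : W.ncard ≤ m)
    (hkc : KConnected ((addClique G S).induce ((F ∪ W)ᶜ)) k) :
    KConnected (G.induce (Wᶜ)) k := by
  classical
  obtain ⟨⟨f, hf⟩, hFS, ⟨r, hr⟩, hfr⟩ := hF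
  have hWS : ∀ v ∈ S, v ∉ W := fun v hv hw => hW hw (Or.inl hv)
  have hWF : ∀ v ∈ F, v ∉ W := fun v hv hw => hW hw (Or.inr hv)
  have hcard : k + 1 ≤ Nat.card (Wᶜ : Set V) := by
    have h1 : (insert f S).ncard = S.ncard + 1 :=
      Set.ncard_insert_of_notMem (fun h => hFS hf h) (Set.toFinite _)
    have h2 : insert f S ⊆ Wᶜ := by
      intro v hv
      rcases hv with rfl | hv
      · exact hWF _ hf
      · exact hWS v hv
    have h3 := Set.ncard_le_ncard h2 (Set.toFinite _)
    rw [Nat.card_coe_set_eq]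
    omega
  refine ⟨hcard, ?_⟩
  intro X hX
  by_contra hnc
  have hne : Nonempty ((X : Set (Wᶜ : Set V))ᶜ : Set (Wᶜ : Set V)) := by
    by_contra hemp
    have hall : ∀ x, x ∈ X := by
      intro x
      by_contra hx
      exact hemp ⟨⟨x, by simpa using hx⟩⟩
    have : X = Finset.univ := by ext x; simp [hall x]
    rw [this, Finset.card_univ, ← Nat.card_eq_fintype_card] at hX
    omega
  obtain ⟨P, ⟨p, hp⟩, ⟨q, hq⟩, hPadj⟩ := aux_split _ hnc
  let A : Finset V := Finset.univ.filter fun v => ∃ (h : v ∈ Wᶜ) (h' : (⟨v, h⟩ : (Wᶜ : Set V)) ∈ (X : Set (Wᶜ : Set V))ᶜ), (⟨⟨v, h⟩, h'⟩ : ((X : Set (Wᶜ : Set V))ᶜ : Set (Wᶜ : Set V))) ∈ P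
  let B : Finset V := Finset.univ.filter fun v => ∃ (h : v ∈ Wᶜ) (h' : (⟨v, h⟩ : (Wᶜ : Set V)) ∈ (X : Set (Wᶜ : Set V))ᶜ), (⟨⟨v, h⟩, h'⟩ : ((X : Set (Wᶜ : Set V))ᶜ : Set (Wᶜ : Set V))) ∉ P
  let Y : Finset V := X.map (Function.Embedding.subtype _)
  have mA : ∀ v, v ∈ A ↔ ∃ (h : v ∈ Wᶜ) (h' : (⟨v, h⟩ : (Wᶜ : Set V)) ∈ (X : Set (Wᶜ : Set V))ᶜ), (⟨⟨v, h⟩, h'⟩ : ((X : Set (Wᶜ : Set V))ᶜ : Set (Wᶜ : Set V))) ∈ P := by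
    intro v; simp only [A, Finset.mem_filter, Finset.mem_univ, true_and]
  have mB : ∀ v, v ∈ B ↔ ∃ (h : v ∈ Wᶜ) (h' : (⟨v, h⟩ : (Wᶜ : Set V)) ∈ (X : Set (Wᶜ : Set V))ᶜ), (⟨⟨v, h⟩, h'⟩ : ((X : Set (Wᶜ : Set V))ᶜ : Set (Wᶜ : Set V))) ∉ P := by
    intro v; simp only [B, Finset.mem_filter, Finset.mem_univ, true_and]
  have mY : ∀ v, v ∈ Y ↔ ∃ (h : v ∈ Wᶜ), (⟨v, h⟩ : (Wᶜ : Set V)) ∈ X := by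
    intro v; simp [Y]
  have hcfg : Cfg G k S.toFinset F.toFinset W.toFinset A B Y :=
    { cG := fun P Q Y => aux_kc G k hG P Q Y
      cH := by
        intro P Q Y h1 h2 h3 h4 h5 h6 h7 h8 h9
        refine aux_kc_ind (addClique G S) ((F ∪ W)ᶜ) k hkc P Q Y ?_ ?_ ?_ h4 h5 h6 h7 h8 ?_
        · intro v hv
          have := h1 v
          simp only [Set.mem_toFinset, Set.mem_compl_iff, Set.mem_union] at this hv
          tauto
        · intro v hv
          have := h2 v hv
          simp only [Set.mem_toFinset, Set.mem_compl_iff, Set.mem_union] at this ⊢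
          tauto
        · intro v hv
          have := h3 v hv
          simp only [Set.mem_toFinset, Set.mem_compl_iff, Set.mem_union] at this ⊢
          tauto
        · intro u hu v hv
          have := h9 u hu v hv
          simp only [Set.mem_toFinset] at this
          simp only [addClique, SimpleGraph.sup_adj, SimpleGraph.fromRel_adj]
          tauto
      hS := by rw [← Set.ncard_eq_toFinset_card', hS]
      hX := by simpa [Y] using hX
      SF := by
        intro v hv hv'
        rw [Set.mem_toFinset] at hv hv'
        exact hFS hv' hv
      SW := by simpa using hWS
      FW := by simpa using hWF
      cov := by
        intro v
        rw [mA, mB, mY, Set.mem_toFinset]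
        by_cases h1 : v ∈ W
        · tauto
        · by_cases h2 : (⟨v, h1⟩ : (Wᶜ : Set V)) ∈ X
          · exact Or.inr (Or.inr (Or.inl ⟨h1, h2⟩))
          · by_cases h3 : (⟨⟨v, h1⟩, by simpa using h2⟩ : ((X : Set (Wᶜ : Set V))ᶜ : Set (Wᶜ : Set V))) ∈ P
            · exact Or.inl ⟨h1, _, h3⟩
            · exact Or.inr (Or.inl ⟨h1, _, h3⟩)
      AB := by
        intro v; rw [mA, mB]
        rintro ⟨_, _, h⟩ ⟨_, _, h'⟩
        exact h' h
      AX := by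
        intro v; rw [mA, mY]
        rintro ⟨_, h, _⟩ ⟨_, h'⟩
        exact h h'
      AW := by
        intro v; rw [mA, Set.mem_toFinset]
        rintro ⟨h, _⟩; exact h
      BX := by
        intro v; rw [mB, mY]
        rintro ⟨_, h, _⟩ ⟨_, h'⟩
        exact h h'
      BW := by
        intro v; rw [mB, Set.mem_toFinset]
        rintro ⟨h, _⟩; exact h
      XW := by
        intro v; rw [mY, Set.mem_toFinset]
        rintro ⟨h, _⟩; exact h
      hA := ⟨p.1.1, (mA _).2 ⟨p.1.2, p.2, hp⟩⟩
      hB := ⟨q.1.1, (mB _).2 ⟨q.1.2, q.2, hq⟩⟩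
      adj := by
        intro u hu v hv ha
        obtain ⟨h1, h2, h3⟩ := (mA u).1 hu
        obtain ⟨h4, h5, h6⟩ := (mB v).1 hv
        exact hPadj _ h3 _ h6 ha
      frag := by
        intro u hu v hv hv'
        rw [Set.mem_toFinset] at hu hv hv'
        exact hfr u hu v ⟨hv, hv'⟩
      Fne := ⟨f, by simpa using hf⟩
      Rne := ⟨r, by simpa using hr.1, by simpa using hr.2⟩ }
  exact hcfg.false m (by rw [← Set.ncard_eq_toFinset_card']; exact hWcard) hδ
end

section
/- Let k, m be positive integers and let (G,C) ∈ F_k(m), i.e., G is a k-connected finite simple graph with |V(G)| ≥ k+1 and C ⊆ G is a complete subgraph with |V(C)| = k such that every vertex of G outside C has degree at least ⌊3k/2⌋ + m − 1 in G. Let S be a separating set of G with |S| = k and let F be a fragment of G to S with C ⊆ G(V(F) ∪ S). If W is a subgraph of G − (S ∪ V(F)) of order at most m and the graph G[S] − V(F ∪ W) is k-connected, then G − V(W) is k-connected. -/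
lemma aux_cut_s5 {V : Type*} [Fintype V] (G : SimpleGraph V) (k : ℕ) (hG : KConnected G k)
    (P T : Set V) (hP : P.Nonempty) (hd : Disjoint P T)
    (hN : ∀ u ∈ P, ∀ v, G.Adj u v → v ∈ P ∪ T) (hz : ∃ z, z ∉ P ∧ z ∉ T) : k ≤ T.ncard := by
  classical
  by_contra hlt
  push Not at hlt
  obtain ⟨T, rfl⟩ : ∃ T' : Finset V, (T' : Set V) = T := ⟨T.toFinite.toFinset, by simp⟩
  rw [Set.ncard_coe_finset] at hlt
  have hc := hG.2 T hlt
  obtain ⟨p, hp⟩ := hP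
  obtain ⟨z, hzP, hzT⟩ := hz
  have hpT : p ∉ (T : Set V) := fun h => Set.disjoint_left.1 hd hp h
  have key : ∀ x y : ((T : Set V)ᶜ : Set V), (G.induce ((T : Set V)ᶜ)).Reachable x y →
      x.1 ∈ P → y.1 ∈ P := by
    rintro x y ⟨w⟩
    induction w with
    | nil => exact id
    | @cons a b c h w ih =>
      intro hx
      apply ih
      rcases hN _ hx _ h with h1 | h1
      · exact h1
      · exact absurd h1 b.2
  exact hzP (key ⟨p, hpT⟩ ⟨z, hzT⟩ (hc.preconnected _ _) hp)

lemma aux_cut_induce {V : Type*} [Fintype V] (G : SimpleGraph V) (U : Set V) (k : ℕ)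
    (hG : KConnected (G.induce U) k)
    (P T : Set V) (hPU : P ⊆ U) (hP : P.Nonempty) (hd : Disjoint P T)
    (hN : ∀ u ∈ P, ∀ v ∈ U, G.Adj u v → v ∈ P ∪ T) (hz : ∃ z ∈ U, z ∉ P ∧ z ∉ T) :
    k ≤ T.ncard := by
  classical
  have := aux_cut_s5 (G.induce U) k hG (Subtype.val ⁻¹' P) (Subtype.val ⁻¹' T)
    (by obtain ⟨p, hp⟩ := hP; exact ⟨⟨p, hPU hp⟩, hp⟩)
    (hd.preimage _)
    (fun u hu v h => hN u hu v v.2 h)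
    (by obtain ⟨z, hzU, h1, h2⟩ := hz; exact ⟨⟨z, hzU⟩, h1, h2⟩)
  refine this.trans ?_
  rw [← Set.ncard_image_of_injective _ Subtype.val_injective]
  exact Set.ncard_le_ncard (by simp) (Set.toFinite _)

lemma aux_sep {V : Type*} [Fintype V] (G : SimpleGraph V) (W : Set V) (k : ℕ)
    (hcard : k + 1 ≤ (Wᶜ).ncard) (h : ¬ KConnected (G.induce Wᶜ) k) :
    ∃ X A B : Set V, X.ncard < k ∧ A.Nonempty ∧ B.Nonempty ∧
      (∀ v, v ∉ W → v ∈ X ∨ v ∈ A ∨ v ∈ B) ∧ (∀ v ∈ X, v ∉ W) ∧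
      (∀ v ∈ A, v ∉ W ∧ v ∉ X ∧ v ∉ B) ∧ (∀ v ∈ B, v ∉ W ∧ v ∉ X ∧ v ∉ A) ∧
      (∀ u ∈ A, ∀ v ∈ B, ¬ G.Adj u v) := by
  classical
  have h2 : ¬ ∀ X : Finset (Wᶜ : Set V), X.card < k →
      ((G.induce Wᶜ).induce ((X : Set (Wᶜ : Set V))ᶜ)).Connected := fun h' => h ⟨by
    rwa [Nat.card_coe_set_eq], h'⟩
  push Not at h2
  obtain ⟨X, hX, hnc⟩ := h2
  have hne : ∃ p : (Wᶜ : Set V), p ∉ X := by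
    by_contra hcon
    push Not at hcon
    have : X = Finset.univ := by ext; simp [hcon]
    rw [this, Finset.card_univ, ← Nat.card_eq_fintype_card, Nat.card_coe_set_eq] at hX
    omega
  obtain ⟨p, hp⟩ := hne
  have hnp : ¬ ((G.induce Wᶜ).induce ((X : Set (Wᶜ : Set V))ᶜ)).Preconnected := by
    intro hpre
    exact hnc { preconnected := hpre, nonempty := ⟨⟨p, by simpa using hp⟩⟩ }
  unfold SimpleGraph.Preconnected at hnp
  push Not at hnp
  obtain ⟨x, y, hxy⟩ := hnp
  set H := (G.induce Wᶜ).induce ((X : Set (Wᶜ : Set V))ᶜ) with hH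
  refine ⟨Subtype.val '' (X : Set (Wᶜ : Set V)), {v | ∃ q, q.1.1 = v ∧ H.Reachable x q},
    {v | ∃ q, q.1.1 = v ∧ ¬ H.Reachable x q}, ?_, ⟨_, x, rfl, .refl _⟩, ⟨_, y, rfl, hxy⟩,
    ?_, ?_, ?_, ?_, ?_⟩
  · rw [Set.ncard_image_of_injective _ Subtype.val_injective, Set.ncard_coe_finset]; exact hX
  · intro v hv
    by_cases hvX : (⟨v, hv⟩ : (Wᶜ : Set V)) ∈ X
    · left; exact ⟨_, hvX, rfl⟩
    · right
      by_cases hr : H.Reachable x ⟨⟨v, hv⟩, by simpa using hvX⟩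
      · left; exact ⟨_, rfl, hr⟩
      · right; exact ⟨_, rfl, hr⟩
  · rintro _ ⟨q, _, rfl⟩; exact q.2
  · rintro _ ⟨q, rfl, hq⟩
    refine ⟨q.1.2, ?_, ?_⟩
    · rintro ⟨r, hr, hrq⟩
      exact q.2 (Subtype.ext hrq ▸ hr)
    · rintro ⟨r, hr, hrq⟩
      have : r = q := Subtype.ext (Subtype.ext hr)
      exact hrq (this ▸ hq)
  · rintro _ ⟨q, rfl, hq⟩
    refine ⟨q.1.2, ?_, ?_⟩
    · rintro ⟨r, hr, hrq⟩
      exact q.2 (Subtype.ext hrq ▸ hr)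
    · rintro ⟨r, hr, hrq⟩
      have : r = q := Subtype.ext (Subtype.ext hr)
      exact hq (this ▸ hrq)
  · rintro _ ⟨q, rfl, hq⟩ _ ⟨r, rfl, hr⟩ hadj
    exact hr (hq.trans (SimpleGraph.Adj.reachable hadj))

lemma aux_main {V : Type*} [Fintype V] [DecidableEq V] (G : SimpleGraph V)
    [DecidableRel G.Adj] (k m : ℕ) (hm : 0 < m)
    (C S F W R X A B : Finset V) (hCk : C.card = k) (hSk : S.card = k)
    (hdeg : ∀ v ∉ C, 3 * k / 2 + m - 1 ≤ G.degree v)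
    (hcutG : ∀ P T : Finset V, P.Nonempty → Disjoint P T →
      (∀ u ∈ P, ∀ v, G.Adj u v → v ∈ P ∨ v ∈ T) → (∃ z, z ∉ P ∧ z ∉ T) → k ≤ T.card)
    (hcutH : ∀ P T : Finset V, P.Nonempty → Disjoint P T → (∀ u ∈ P, u ∈ R) →
      (∀ u ∈ P, ∀ v, v ∉ F → v ∉ W → G.Adj u v → v ∈ P ∨ v ∈ T) →
      (∃ z, z ∉ F ∧ z ∉ W ∧ z ∉ P ∧ z ∉ T) → k ≤ T.card)
    (hR : ∀ v, v ∈ R ↔ v ∉ S ∧ v ∉ F ∧ v ∉ W)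
    (hFS : ∀ v ∈ F, v ∉ S) (hWS : ∀ v ∈ W, v ∉ S ∧ v ∉ F)
    (hFe : ∀ u ∈ F, ∀ v, G.Adj u v → v ∈ F ∨ v ∈ S)
    (hRne : R.Nonempty) (hCFS : ∀ v ∈ C, v ∈ F ∨ v ∈ S) (hWm : W.card ≤ m)
    (hX : X.card < k) (hA : A.Nonempty) (hB : B.Nonempty)
    (hcov : ∀ v, v ∉ W → v ∈ X ∨ v ∈ A ∨ v ∈ B) (hXW : ∀ v ∈ X, v ∉ W)
    (hA' : ∀ v ∈ A, v ∉ W ∧ v ∉ X ∧ v ∉ B) (hB' : ∀ v ∈ B, v ∉ W ∧ v ∉ X ∧ v ∉ A)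
    (hAB : ∀ u ∈ A, ∀ v ∈ B, ¬ G.Adj u v) (hCB : ∀ v ∈ C, v ∉ B) : False := by
  have hBA : ∀ u ∈ B, ∀ v ∈ A, ¬ G.Adj u v := fun u hu v hv h => hAB v hv u hu h.symm
  obtain ⟨s0, hs0S, hs0X⟩ : ∃ s ∈ S, s ∉ X :=
    Finset.exists_mem_notMem_of_card_lt_card (by omega)
  -- S meets both sides
  have meet : ∀ A B : Finset V, A.Nonempty → B.Nonempty →
      (∀ v, v ∉ W → v ∈ X ∨ v ∈ A ∨ v ∈ B) →
      (∀ v ∈ A, v ∉ W ∧ v ∉ X ∧ v ∉ B) → (∀ v ∈ B, v ∉ W ∧ v ∉ X ∧ v ∉ A) →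
      (∀ u ∈ B, ∀ v ∈ A, ¬ G.Adj u v) → ∃ s ∈ S, s ∈ B := by
    intro A B hA hB hcov hA' hB' hBA
    by_contra hcon
    push Not at hcon
    by_cases hne : (B ∩ R).Nonempty
    · have := hcutH (B ∩ R) X hne (by rw [Finset.disjoint_left]; grind) (by grind)
        (by
          intro u hu v hvF hvW huv
          have := hcov v hvW
          have := hBA u (by grind) v
          have := hR v
          grind)
        ⟨s0, by grind⟩
      omega
    · have hBF : ∀ v ∈ B, v ∈ F := by
        intro v hv
        by_contra hvF
        exact hne ⟨v, by grind⟩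
      have := hcutG B X hB (by rw [Finset.disjoint_left]; grind)
        (by
          intro u hu v huv
          have := hFe u (hBF u hu) v huv
          have := hcov v
          have := hBA u hu v
          grind)
        (by obtain ⟨a, ha⟩ := hA; exact ⟨a, by grind⟩)
      omega
  obtain ⟨sb, hsbS, hsbB⟩ := meet A B hA hB hcov hA' hB' hBA
  obtain ⟨sa, hsaS, hsaA⟩ := meet B A hB hA (by grind) hB' hA' hAB
  clear meet
  have cS : (S ∩ A).card + (S ∩ B).card + (S ∩ X).card = k := by
    rw [← hSk, ← Finset.card_union_of_disjoint (by rw [Finset.disjoint_left]; grind),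
      ← Finset.card_union_of_disjoint (by rw [Finset.disjoint_left]; grind)]
    congr 1
    ext v
    have := hcov v
    grind
  have cX : (S ∩ X).card + (X ∩ F).card + (X ∩ R).card < k := by
    refine lt_of_le_of_lt ?_ hX
    rw [← Finset.card_union_of_disjoint (by rw [Finset.disjoint_left]; grind),
      ← Finset.card_union_of_disjoint (by rw [Finset.disjoint_left]; grind)]
    apply Finset.card_le_card
    intro v
    grind
  have u3 : ∀ P Q T : Finset V, (P ∪ Q ∪ T).card ≤ P.card + Q.card + T.card := by
    intro P Q T
    have := Finset.card_union_le (P ∪ Q) T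
    have := Finset.card_union_le P Q
    omega
  have f1 : (F ∩ B).Nonempty → (S ∩ A).card ≤ (X ∩ F).card := by
    intro hne
    have h1 := hcutG (F ∩ B) (S ∩ B ∪ X ∩ F ∪ S ∩ X) hne
      (by rw [Finset.disjoint_left]; grind)
      (by
        intro u hu v huv
        have := hFe u (by grind) v huv
        have := hcov v
        have := hBA u (by grind) v
        grind) ⟨sa, by grind⟩
    have := u3 (S ∩ B) (X ∩ F) (S ∩ X)
    omega
  have f2 : (S ∩ B).card ≤ (X ∩ F).card := by
    by_cases hne : (F ∩ A).Nonempty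
    · have h1 := hcutG (F ∩ A) (S ∩ A ∪ X ∩ F ∪ S ∩ X) hne
        (by rw [Finset.disjoint_left]; grind)
        (by
          intro u hu v huv
          have := hFe u (by grind) v huv
          have := hcov v
          have := hAB u (by grind) v
          grind) ⟨sb, by grind⟩
      have := u3 (S ∩ A) (X ∩ F) (S ∩ X)
      omega
    · have h1 : C ⊆ S ∩ A ∪ X ∩ F ∪ S ∩ X := by
        intro v hv
        have := hCFS v hv
        have := hCB v hv
        have := hcov v
        have : ¬ (v ∈ F ∧ v ∈ A) := fun h => hne ⟨v, by grind⟩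
        grind
      have := Finset.card_le_card h1
      have := u3 (S ∩ A) (X ∩ F) (S ∩ X)
      omega
  have f3 : (R ∩ A).Nonempty → (S ∩ B).card ≤ (X ∩ R).card := by
    intro hne
    have h1 := hcutH (R ∩ A) (S ∩ A ∪ X ∩ R ∪ S ∩ X) hne
      (by rw [Finset.disjoint_left]; grind) (by grind)
      (by
        intro u hu v hvF hvW huv
        have := hcov v hvW
        have := hR v
        have := hAB u (by grind) v
        grind) ⟨sb, by grind⟩
    have := u3 (S ∩ A) (X ∩ R) (S ∩ X)
    omega
  have f4 : ¬ (R ∩ B).Nonempty := by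
    intro hne
    have h1 := hcutH (R ∩ B) (S ∩ B ∪ X ∩ R ∪ S ∩ X) hne
      (by rw [Finset.disjoint_left]; grind) (by grind)
      (by
        intro u hu v hvF hvW huv
        have := hcov v hvW
        have := hR v
        have := hBA u (by grind) v
        grind) ⟨sa, by grind⟩
    have := u3 (S ∩ B) (X ∩ R) (S ∩ X)
    omega
  have f5 : ¬ (R ∩ A).Nonempty → k / 2 ≤ (X ∩ R).card := by
    intro hne
    obtain ⟨v, hv⟩ := hRne
    have hRX : ∀ u ∈ R, u ∈ X := by
      intro u hu
      have := hcov u (by grind)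
      have : u ∉ A := fun h => hne ⟨u, by grind⟩
      have : u ∉ B := fun h => f4 ⟨u, by grind⟩
      grind
    have h1 := hdeg v (by grind)
    have h2 : G.neighborFinset v ⊆ S ∪ W ∪ (X ∩ R).erase v := by
      intro u hu
      rw [SimpleGraph.mem_neighborFinset] at hu
      have := hFe u
      have := hu.symm
      have := hu.ne
      have := hR u
      have := hRX u
      grind
    have h3 := Finset.card_le_card h2
    rw [SimpleGraph.card_neighborFinset_eq_degree] at h3
    have := u3 S W ((X ∩ R).erase v)
    have hvm : v ∈ X ∩ R := by grind
    have := Finset.card_erase_of_mem hvm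
    have : 0 < (X ∩ R).card := Finset.card_pos.2 ⟨v, hvm⟩
    omega
  by_cases hFB : (F ∩ B).Nonempty
  · have := f1 hFB
    by_cases hRA : (R ∩ A).Nonempty
    · have := f3 hRA
      omega
    · have := f5 hRA
      omega
  · have hBS : ∀ u ∈ B, u ∈ S := by
      intro u hu
      have : u ∉ F := fun h => hFB ⟨u, by grind⟩
      have : u ∉ R := fun h => f4 ⟨u, by grind⟩
      grind
    have h1 := hdeg sb (by grind)
    have h2 : G.neighborFinset sb ⊆ X ∪ W ∪ (S ∩ B).erase sb := by
      intro u hu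
      rw [SimpleGraph.mem_neighborFinset] at hu
      have := hu.ne
      have := hBA sb hsbB u
      have := hcov u
      grind
    have h3 := Finset.card_le_card h2
    rw [SimpleGraph.card_neighborFinset_eq_degree] at h3
    have := u3 X W ((S ∩ B).erase sb)
    have hvm : sb ∈ S ∩ B := by grind
    have := Finset.card_erase_of_mem hvm
    have : 0 < (S ∩ B).card := Finset.card_pos.2 ⟨sb, hvm⟩
    by_cases hRA : (R ∩ A).Nonempty
    · have := f3 hRA
      omega
    · have := f5 hRA
      omega

/-- Let `(G, C) ∈ F_k(m)`, `S` a separating set with `|S| = k`, and `F` a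
fragment of `G` to `S` with `C ⊆ G(V(F) ∪ S)`. If `W ⊆ G - (S ∪ V(F))` has
order at most `m` and `G[S] - V(F ∪ W)` is `k`-connected, then `G - V(W)` is
`k`-connected. -/
theorem stmt_5 {V : Type*} [Fintype V] [DecidableEq V] (G : SimpleGraph V)
    [DecidableRel G.Adj] (k m : ℕ) (hk : 0 < k) (hm : 0 < m)
    (hG : KConnected G k)
    (C : Set V) (hCcard : C.ncard = k)
    (hCclique : ∀ u ∈ C, ∀ v ∈ C, u ≠ v → G.Adj u v)
    (hdeg : ∀ v ∉ C, 3 * k / 2 + m - 1 ≤ G.degree v)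
    (S F : Set V) (hsep : ¬ (G.induce (Sᶜ)).Connected) (hS : S.ncard = k)
    (hF : IsFragment G S F) (hC : C ⊆ F ∪ S)
    (W : Set V) (hW : W ⊆ (S ∪ F)ᶜ) (hWcard : W.ncard ≤ m)
    (hkc : KConnected ((addClique G S).induce ((F ∪ W)ᶜ)) k) :
    KConnected (G.induce (Wᶜ)) k := by
  obtain ⟨C, rfl⟩ : ∃ T' : Finset V, (T' : Set V) = C := ⟨C.toFinite.toFinset, by simp⟩
  obtain ⟨S, rfl⟩ : ∃ T' : Finset V, (T' : Set V) = S := ⟨S.toFinite.toFinset, by simp⟩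
  obtain ⟨F, rfl⟩ : ∃ T' : Finset V, (T' : Set V) = F := ⟨F.toFinite.toFinset, by simp⟩
  obtain ⟨W, rfl⟩ : ∃ T' : Finset V, (T' : Set V) = W := ⟨W.toFinite.toFinset, by simp⟩
  rw [Set.ncard_coe_finset] at hCcard hS hWcard
  obtain ⟨⟨f, hf⟩, hFS, -, hFe⟩ := hF
  have hFS' : ∀ v ∈ F, v ∉ S := fun v hv => by simpa using hFS hv
  have hWS : ∀ v ∈ W, v ∉ S ∧ v ∉ F := fun v hv => by simpa using hW hv
  by_contra hnot
  obtain ⟨X, A, B, hX, hA, hB, hcov, hXW, hA', hB', hAB⟩ := aux_sep G W k (by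
    have h1 : insert f S ⊆ Wᶜ := by
      intro v hv
      rw [Finset.mem_compl]
      simp only [Finset.mem_insert, Finset.mem_coe] at hv hf
      grind
    have h2 := Finset.card_le_card h1
    rw [Finset.card_insert_of_notMem (hFS' f hf), hS] at h2
    rw [← Finset.coe_compl, Set.ncard_coe_finset]
    exact h2) hnot
  obtain ⟨X, rfl⟩ : ∃ T' : Finset V, (T' : Set V) = X := ⟨X.toFinite.toFinset, by simp⟩
  obtain ⟨A, rfl⟩ : ∃ T' : Finset V, (T' : Set V) = A := ⟨A.toFinite.toFinset, by simp⟩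
  obtain ⟨B, rfl⟩ : ∃ T' : Finset V, (T' : Set V) = B := ⟨B.toFinite.toFinset, by simp⟩
  rw [Set.ncard_coe_finset] at hX
  simp only [Finset.mem_coe, Finset.coe_nonempty] at *
  have hcutG : ∀ P T : Finset V, P.Nonempty → Disjoint P T →
      (∀ u ∈ P, ∀ v, G.Adj u v → v ∈ P ∨ v ∈ T) → (∃ z, z ∉ P ∧ z ∉ T) → k ≤ T.card := by
    intro P T hP hd hN hz
    have := aux_cut_s5 G k hG P T (by simpa using hP) (by simpa using hd)
      (by simpa using hN) (by simpa using hz)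
    rwa [Set.ncard_coe_finset] at this
  have hR : ∀ v, v ∈ (S ∪ F ∪ W)ᶜ ↔ v ∉ S ∧ v ∉ F ∧ v ∉ W := by
    intro v; simp [and_assoc]
  have hcutH : ∀ P T : Finset V, P.Nonempty → Disjoint P T → (∀ u ∈ P, u ∈ (S ∪ F ∪ W)ᶜ) →
      (∀ u ∈ P, ∀ v, v ∉ F → v ∉ W → G.Adj u v → v ∈ P ∨ v ∈ T) →
      (∃ z, z ∉ F ∧ z ∉ W ∧ z ∉ P ∧ z ∉ T) → k ≤ T.card := by
    intro P T hP hd hPR hN hz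
    have := aux_cut_induce (addClique G S) _ k hkc P T
      (by
        intro v hv
        have := (hR v).1 (hPR v (by simpa using hv))
        simp [this])
      (by simpa using hP) (by simpa using hd)
      (by
        intro u hu v hv huv
        have hu' : u ∈ P := by simpa using hu
        have := (hR u).1 (hPR u hu')
        simp only [addClique, SimpleGraph.sup_adj, SimpleGraph.fromRel_adj, Finset.mem_coe] at huv
        have h3 : G.Adj u v := by tauto
        have h4 : v ∉ F ∧ v ∉ W := by simpa using hv
        simpa using hN u hu' v h4.1 h4.2 h3)
      (by
        obtain ⟨z, h1, h2, h3, h4⟩ := hz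
        exact ⟨z, by simp [h1, h2], by simpa using h3, by simpa using h4⟩)
    rwa [Set.ncard_coe_finset] at this
  have hRne : ((S ∪ F ∪ W)ᶜ).Nonempty := by
    have h1 := hkc.1
    rw [Nat.card_coe_set_eq, ← Finset.coe_union, ← Finset.coe_compl, Set.ncard_coe_finset] at h1
    obtain ⟨v, hv, hvS⟩ := Finset.exists_mem_notMem_of_card_lt_card (s := S) (t := (F ∪ W)ᶜ)
      (by omega)
    refine ⟨v, (hR v).2 ⟨hvS, ?_⟩⟩
    simpa using hv
  have hFe' : ∀ u ∈ F, ∀ v, G.Adj u v → v ∈ F ∨ v ∈ S := by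
    intro u hu v huv
    by_contra hcon
    push Not at hcon
    exact hFe u hu v ⟨by simpa using hcon.2, by simpa using hcon.1⟩ huv
  have hCFS : ∀ v ∈ C, v ∈ F ∨ v ∈ S := fun v hv => by simpa using hC hv
  obtain ⟨c, hcC, hcX⟩ : ∃ s ∈ C, s ∉ X :=
    Finset.exists_mem_notMem_of_card_lt_card (by omega)
  have hcW : c ∉ W := by grind
  have hBA : ∀ u ∈ B, ∀ v ∈ A, ¬ G.Adj u v := fun u hu v hv h => hAB v hv u hu h.symm
  rcases hcov c hcW with h | h | h
  · exact hcX h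
  · exact aux_main G k m hm C S F W _ X A B hCcard hS hdeg hcutG hcutH hR hFS' hWS hFe' hRne
      hCFS hWcard hX hA hB hcov hXW hA' hB' hAB (by
        intro v hv hvB
        exact hAB c h v hvB (hCclique c hcC v hv (by grind)))
  · exact aux_main G k m hm C S F W _ X B A hCcard hS hdeg hcutG hcutH hR hFS' hWS hFe' hRne
      hCFS hWcard hX hB hA (by grind) hXW hB' hA' hBA (by
        intro v hv hvA
        exact hBA c h v hvA (hCclique c hcC v hv (by grind)))
end

section
/- Let G be a connected finite simple graph with minimum degree δ(G) ≥ d, where d ≥ 1. Then for every tree T of order d, G contains a subtree T′ isomorphic to T such that G − V(T′) is connected. -/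
namespace NST
open Finset

/-- `Desc par y t`: `t` lies in the subtree rooted at `y`. -/
def Desc {W : Type*} (par : W → W) (y t : W) : Prop := ∃ k : ℕ, par^[k] t = y

section tree
variable {W : Type*} {par : W → W} {dep : W → ℕ} {r : W}

lemma desc_refl (y : W) : Desc par y y := ⟨0, rfl⟩

lemma desc_step {y t : W} (h : Desc par y t) (hne : t ≠ y) : Desc par y (par t) := by
  obtain ⟨k, hk⟩ := h
  cases k with
  | zero => exact absurd hk hne
  | succ k => exact ⟨k, by simpa using hk⟩

lemma desc_of_par {y t : W} (h : Desc par y (par t)) : Desc par y t := by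
  obtain ⟨k, hk⟩ := h
  exact ⟨k + 1, by simpa using hk⟩

lemma desc_trans {x y t : W} (h : Desc par x y) (h' : Desc par y t) : Desc par x t := by
  obtain ⟨k, rfl⟩ := h
  obtain ⟨l, rfl⟩ := h'
  exact ⟨k + l, Function.iterate_add_apply _ _ _ _⟩

lemma desc_comp {x y t : W} (h : Desc par x t) (h' : Desc par y t) :
    Desc par x y ∨ Desc par y x := by
  obtain ⟨k, rfl⟩ := h
  obtain ⟨l, rfl⟩ := h'
  rcases le_total k l with hkl | hkl
  · right
    exact ⟨l - k, by rw [← Function.iterate_add_apply, Nat.sub_add_cancel hkl]⟩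
  · left
    exact ⟨k - l, by rw [← Function.iterate_add_apply, Nat.sub_add_cancel hkl]⟩

lemma dep_iter (hr : par r = r) (hd : ∀ t, t ≠ r → dep (par t) < dep t) (k : ℕ) (t : W) :
    dep (par^[k] t) ≤ dep t := by
  induction k generalizing t with
  | zero => exact le_rfl
  | succ k ih =>
    rw [Function.iterate_succ_apply]
    refine (ih _).trans ?_
    by_cases h : t = r
    · rw [h, hr]
    · exact (hd t h).le

lemma desc_dep (hr : par r = r) (hd : ∀ t, t ≠ r → dep (par t) < dep t) {y t : W}
    (h : Desc par y t) : dep y ≤ dep t := by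
  obtain ⟨k, rfl⟩ := h
  exact dep_iter hr hd k t

lemma iter_r (hr : par r = r) (k : ℕ) : par^[k] r = r := by
  induction k with
  | zero => rfl
  | succ k ih => rw [Function.iterate_succ_apply, hr, ih]

lemma desc_r (hr : par r = r) {y : W} (h : Desc par y r) : y = r := by
  obtain ⟨k, rfl⟩ := h
  exact iter_r hr k

lemma desc_dep_lt (hr : par r = r) (hd : ∀ t, t ≠ r → dep (par t) < dep t) {y t : W}
    (h : Desc par y t) (hne : t ≠ y) : dep y < dep t := by
  have htr : t ≠ r := by
    rintro rfl
    exact hne (desc_r hr h).symm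
  exact lt_of_le_of_lt (desc_dep hr hd (desc_step h hne)) (hd t htr)

lemma par_not_desc (hr : par r = r) (hd : ∀ t, t ≠ r → dep (par t) < dep t) {y : W}
    (hy : y ≠ r) : ¬ Desc par y (par y) := fun h => by
  have := desc_dep hr hd h
  have := hd y hy
  omega

lemma root_desc (hd : ∀ t, t ≠ r → dep (par t) < dep t) (t : W) : Desc par r t := by
  induction h : dep t using Nat.strong_induction_on generalizing t with
  | _ n ih =>
    by_cases ht : t = r
    · rw [ht]; exact desc_refl _
    · exact desc_of_par (ih _ (h ▸ hd t ht) _ rfl)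

lemma exists_child (hr : par r = r) {y t : W} (h : Desc par y t) (hne : t ≠ y) :
    ∃ c, c ≠ r ∧ c ≠ y ∧ par c = y ∧ Desc par c t := by
  obtain ⟨k, hk⟩ := h
  induction k generalizing t with
  | zero => exact absurd hk hne
  | succ k ih =>
    rw [Function.iterate_succ_apply] at hk
    by_cases h1 : par t = y
    · refine ⟨t, ?_, hne, h1, desc_refl _⟩
      rintro rfl
      exact hne (hr ▸ h1)
    · obtain ⟨c, h2, h3, h4, h5⟩ := ih h1 hk
      exact ⟨c, h2, h3, h4, desc_of_par h5⟩

end tree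

lemma exists_rooted {W : Type*} (T : SimpleGraph W) (hT : T.IsTree) :
    ∃ (r : W) (par : W → W) (dep : W → ℕ), par r = r ∧ (∀ t, t ≠ r → dep (par t) < dep t) ∧
      ∀ a b, T.Adj a b → (b ≠ r ∧ par b = a) ∨ (a ≠ r ∧ par a = b) := by
  classical
  obtain ⟨r⟩ := hT.1.nonempty
  choose P hP hPu using fun t => hT.existsUnique_path r t
  have key : ∀ a b, T.Adj a b → b ∉ (P a).support → b ≠ r ∧ (P b).penultimate = a := by
    intro a b hab hb
    have h1 : ((P a).concat hab).IsPath := (hP a).concat hb hab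
    have h2 := hPu b _ h1
    refine ⟨?_, ?_⟩
    · rintro rfl
      exact hb (P a).start_mem_support
    · rw [← h2]; simp
  refine ⟨r, fun t => (P t).penultimate, fun t => (P t).length, ?_, ?_, ?_⟩
  · have : P r = .nil := (hPu r _ SimpleGraph.Walk.IsPath.nil).symm
    simp [this]
  · intro t ht
    have hn : ¬ (P t).Nil := SimpleGraph.Walk.not_nil_of_ne (Ne.symm ht)
    have h1 : (P t).dropLast.IsPath := (hP t).dropLast
    have h2 := hPu _ _ h1
    have h3 := congrArg SimpleGraph.Walk.length h2
    have h4 : 0 < (P t).length := by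
      rcases Nat.eq_zero_or_pos (P t).length with h | h
      · exact absurd (SimpleGraph.Walk.length_eq_zero_iff.1 h) hn
      · exact h
    simp only [SimpleGraph.Walk.length_dropLast] at h3
    dsimp only
    omega
  · intro a b hab
    by_cases hb : b ∈ (P a).support
    · right
      refine key b a hab.symm fun ha => ?_
      exact hT.2.ne_mem_support_of_support_of_adj_of_isPath (hP a) (hP b) hab hb ha
    · left
      exact key a b hab hb

lemma hall_tight {ι α : Type*} [DecidableEq ι] [DecidableEq α] (s : Finset ι)
    (F : ι → Finset α) (f : ι → α) (hf : Set.InjOn f s) (hfF : ∀ t ∈ s, f t ∈ F t) :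
    ∃ Q ⊆ s, Q.biUnion F = Q.image f ∧ ∀ u, u ∉ Q.biUnion F →
      ∃ h : ι → α, Set.InjOn h s ∧ ∀ t ∈ s, h t ∈ F t ∧ h t ≠ u := by
  classical
  have himg : ∀ Q, Q ⊆ s → Q.image f ⊆ Q.biUnion F := by
    intro Q hQ x hx
    obtain ⟨t, ht, rfl⟩ := mem_image.1 hx
    exact mem_biUnion.2 ⟨t, ht, hfF t (hQ ht)⟩
  have hcard : ∀ Q, Q ⊆ s → (Q.image f).card = Q.card := fun Q hQ =>
    card_image_of_injOn (hf.mono (by exact_mod_cast hQ))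
  have hle : ∀ Q, Q ⊆ s → Q.card ≤ (Q.biUnion F).card := fun Q hQ =>
    (hcard Q hQ) ▸ card_le_card (himg Q hQ)
  let 𝒬 := s.powerset.filter fun Q => (Q.biUnion F).card ≤ Q.card
  have hne : 𝒬.Nonempty := ⟨∅, by simp [𝒬]⟩
  obtain ⟨Q, hQ, hmax⟩ := exists_max_image 𝒬 card hne
  simp only [𝒬, mem_filter, mem_powerset] at hQ hmax
  refine ⟨Q, hQ.1, (eq_of_subset_of_card_le (himg Q hQ.1) (by rw [hcard Q hQ.1]; exact hQ.2)).symm, ?_⟩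
  intro u hu
  have hall : ∀ A : Finset s, A.card ≤ (A.biUnion fun t => (F t).erase u).card := by
    intro A
    set A' : Finset ι := A.map ⟨Subtype.val, Subtype.val_injective⟩ with hA'
    have hA's : A' ⊆ s := by
      intro x hx
      simp [hA'] at hx
      exact hx.1
    have hc : A'.card = A.card := card_map _
    have hb : (A.biUnion fun t => (F t).erase u) = (A'.biUnion F).erase u := by
      ext x
      simp [hA']
      grind
    rw [hb, ← hc]
    by_cases hu' : u ∈ A'.biUnion F
    · rw [card_erase_of_mem hu']
      by_contra hlt
      have h0 := hle A' hA's
      have htight : (A'.biUnion F).card ≤ A'.card := by omega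
      have hun : ((Q ∪ A').biUnion F).card ≤ (Q ∪ A').card := by
        have e1 : (Q ∪ A').biUnion F = Q.biUnion F ∪ A'.biUnion F := union_biUnion
        have e2 := card_union_add_card_inter (Q.biUnion F) (A'.biUnion F)
        have e3 := card_union_add_card_inter Q A'
        have e4 : (Q ∩ A').card ≤ (Q.biUnion F ∩ A'.biUnion F).card :=
          (hle _ (inter_subset_left.trans hQ.1)).trans (card_le_card (by
            intro x hx
            simp only [mem_biUnion, mem_inter] at hx ⊢
            grind))
        rw [e1]
        have := hQ.2
        omega
      have h1 := hmax (Q ∪ A') ⟨union_subset hQ.1 hA's, hun⟩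
      have h2 : Q = Q ∪ A' := eq_of_subset_of_card_le subset_union_left h1
      apply hu
      rw [h2, union_biUnion]
      exact mem_union_right _ hu'
    · rw [erase_eq_of_notMem hu']
      exact hle A' hA's
  obtain ⟨h, hi, hm⟩ := (Finset.all_card_le_biUnion_card_iff_exists_injective _).1 hall
  refine ⟨fun t => if ht : t ∈ s then h ⟨t, ht⟩ else f t, ?_, ?_⟩
  · intro a ha b hb hab
    simp only [mem_coe] at ha hb
    simp only [ha, hb, dif_pos] at hab
    simpa using hi hab
  · intro t ht
    simp only [ht, dif_pos]
    have := hm ⟨t, ht⟩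
    simp at this
    exact ⟨this.2, this.1⟩

/-- partial copy on `K` -/
def Valid {V W : Type*} (G : SimpleGraph V) (par : W → W) (r : W) (K : Finset W) (g : W → V) :
    Prop := Set.InjOn g K ∧ ∀ t ∈ K, t ≠ r → G.Adj (g (par t)) (g t)

lemma ext_lemma {V W : Type*} [DecidableEq V] [DecidableEq W] (G : SimpleGraph V)
    {par : W → W} {dep : W → ℕ} {r : W} (hd : ∀ t, t ≠ r → dep (par t) < dep t)
    (K K' : Finset W) (hKK : K ⊆ K') (hrK : r ∈ K) (hKp : ∀ t ∈ K, par t ∈ K)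
    (hKp' : ∀ t ∈ K', par t ∈ K') (X : Finset V) (g : W → V) (hg : Valid G par r K g)
    (hstep : ∀ (B : Finset V) (u : V), u ∈ B → B.card < K'.card → K.image g ⊆ B →
      (∃ t ∈ K', t ∉ K ∧ ((par t ∈ K ∧ u = g (par t)) ∨ (par t ∉ K ∧ u ∈ X))) →
      ∃ x ∈ X, x ∉ B ∧ G.Adj u x) :
    ∃ g' : W → V, Valid G par r K' g' ∧ (∀ t ∈ K, g' t = g t) ∧
      ∀ t ∈ K', t ∉ K → g' t ∈ X := by
  suffices H : ∀ (n : ℕ) (K₁ : Finset W) (g₁ : W → V), (K' \ K₁).card = n → K ⊆ K₁ → K₁ ⊆ K' →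
      (∀ t ∈ K₁, par t ∈ K₁) → Valid G par r K₁ g₁ → (∀ t ∈ K, g₁ t = g t) →
      (∀ t ∈ K₁, t ∉ K → g₁ t ∈ X) →
      ∃ g' : W → V, Valid G par r K' g' ∧ (∀ t ∈ K, g' t = g t) ∧ ∀ t ∈ K', t ∉ K → g' t ∈ X by
    exact H _ K g rfl subset_rfl hKK hKp hg (fun _ _ => rfl) (fun t h h' => absurd h h')
  intro n
  induction n with
  | zero =>
    intro K₁ g₁ hn h1 h2 h3 h4 h5 h6
    have : K₁ = K' := subset_antisymm h2 (by
      rw [card_eq_zero, sdiff_eq_empty_iff_subset] at hn; exact hn)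
    subst this
    exact ⟨g₁, h4, h5, h6⟩
  | succ n ih =>
    intro K₁ g₁ hn h1 h2 h3 h4 h5 h6
    have hne : (K' \ K₁).Nonempty := by rw [← card_pos]; omega
    obtain ⟨t, ht, hmin⟩ := exists_min_image (K' \ K₁) dep hne
    simp only [mem_sdiff] at ht hmin
    have htr : t ≠ r := by rintro rfl; exact ht.2 (h1 hrK)
    have hpt : par t ∈ K₁ := by
      by_contra hc
      have := hmin _ ⟨hKp' t ht.1, hc⟩
      have := hd t htr
      omega
    have hlt : K₁.card < K'.card := card_lt_card ⟨h2, fun h => ht.2 (h ht.1)⟩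
    obtain ⟨x, hxX, hxB, hadj⟩ := hstep (K₁.image g₁) (g₁ (par t)) (mem_image_of_mem _ hpt)
      (lt_of_le_of_lt card_image_le hlt)
      (by
        intro z hz
        obtain ⟨s, hs, rfl⟩ := mem_image.1 hz
        exact mem_image.2 ⟨s, h1 hs, h5 s hs⟩)
      ⟨t, ht.1, fun h => ht.2 (h1 h), by
        by_cases hp : par t ∈ K
        · exact Or.inl ⟨hp, h5 _ hp⟩
        · exact Or.inr ⟨hp, h6 _ hpt hp⟩⟩
    have hupd : ∀ s ∈ K₁, Function.update g₁ t x s = g₁ s := fun s hs =>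
      Function.update_of_ne (by rintro rfl; exact ht.2 hs) _ _
    refine ih (insert t K₁) (Function.update g₁ t x) ?_ (h1.trans (subset_insert _ _))
      (insert_subset ht.1 h2) ?_ ⟨?_, ?_⟩ ?_ ?_
    · rw [sdiff_insert, card_erase_of_mem (by simp [ht]), hn]; rfl
    · intro s hs
      rcases mem_insert.1 hs with rfl | hs
      · exact mem_insert_of_mem hpt
      · exact mem_insert_of_mem (h3 s hs)
    · rw [coe_insert, Set.injOn_insert (by simpa using ht.2)]
      refine ⟨fun a ha b hb hab => ?_, ?_⟩
      · rw [hupd a ha, hupd b hb] at hab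
        exact h4.1 ha hb hab
      · rintro ⟨s, hs, hse⟩
        rw [hupd s hs, Function.update_self] at hse
        exact hxB (mem_image.2 ⟨s, hs, hse⟩)
    · intro s hs hsr
      rcases mem_insert.1 hs with rfl | hs
      · rw [Function.update_self, hupd _ hpt]; exact hadj
      · rw [hupd s hs, hupd _ (h3 s hs)]
        exact h4.2 s hs hsr
    · intro s hs
      rw [hupd s (h1 hs)]; exact h5 s hs
    · intro s hs hsK
      rcases mem_insert.1 hs with rfl | hs
      · rw [Function.update_self]; exact hxX
      · rw [hupd s hs]; exact h6 s hs hsK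

section main
open Classical in
lemma count_one {V : Type*} (G : SimpleGraph V) (U B : Finset V) (u a : V) (d : ℕ)
    (hu : u ∈ B) (hB : B.card < d) (hdeg : d ≤ (U.filter (G.Adj u)).card) :
    ∃ x ∈ U, x ∉ B ∧ x ≠ a ∧ G.Adj u x := by
  by_contra hcon
  push Not at hcon
  have hsub : U.filter (G.Adj u) ⊆ insert a (B.erase u) := by
    intro x hx
    obtain ⟨h1, h2⟩ := mem_filter.1 hx
    have h3 := h2.ne
    by_cases hxa : x = a
    · simp [hxa]
    · by_cases hxB : x ∈ B
      · exact mem_insert_of_mem (mem_erase.2 ⟨h3.symm, hxB⟩)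
      · exact absurd h2 (hcon x h1 hxB hxa)
  have h1 := card_le_card hsub
  have h2 := card_insert_le a (B.erase u)
  have h3 := card_erase_of_mem hu
  have h4 : 0 < B.card := card_pos.2 ⟨u, hu⟩
  omega

/-- full copy inside `U` -/
def IsCopy {V W : Type*} [Fintype W] (G : SimpleGraph V) (par : W → W) (r : W) (U : Finset V)
    (f : W → V) : Prop := Valid G par r Finset.univ f ∧ ∀ t, f t ∈ U

open Classical in
lemma core {V W : Type*} [Fintype W] (G : SimpleGraph V)
    {par : W → W} {dep : W → ℕ} {r : W} (hr : par r = r)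
    (hd : ∀ t, t ≠ r → dep (par t) < dep t)
    (U A : Finset V) (d : ℕ) (hcard : Fintype.card W = d)
    (hdeg : ∀ v ∈ U, v ∉ A → d ≤ (U.filter (G.Adj v)).card)
    (hcover : ∀ f, IsCopy G par r U f → ∀ a ∈ A, ∃ t, f t = a)
    (y : W)
    (hcl : ∀ c, Desc par y c → c ≠ y → ∀ f, IsCopy G par r U f →
      (∃ t, Desc par c t ∧ f t ∈ A) → f c ∈ A ∧ f (par c) ∈ A ∧
        ∀ x ∈ U, (∀ t, f t ≠ x) → ¬ G.Adj (f (par c)) x)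
    (f : W → V) (hf : IsCopy G par r U f) (hN : ∃ t, Desc par y t ∧ f t ∈ A)
    (w : V) (hwU : w ∈ U) (hw : ∀ t, f t ≠ w) (hwadj : y ≠ r → G.Adj (f (par y)) w) :
    False := by
  have finj : Function.Injective f := by
    intro a b hab
    exact hf.1.1 (by simp) (by simp) hab
  have fadj : ∀ t, t ≠ r → G.Adj (f (par t)) (f t) := fun t => hf.1.2 t (mem_univ _)
  have hyA : f y ∈ A := by
    obtain ⟨t, ht, htA⟩ := hN
    by_cases hty : t = y
    · exact hty ▸ htA
    · obtain ⟨c, h1, h2, h3, h4⟩ := exists_child hr ht hty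
      have := (hcl c (desc_of_par (h3 ▸ desc_refl _)) h2 f hf ⟨t, h4, htA⟩).2.1
      rwa [h3] at this
  have hwA : w ∉ A := fun h => by
    obtain ⟨t, ht⟩ := hcover f hf w h
    exact hw t ht
  have hparS : ∀ t, ¬ Desc par y t → ¬ Desc par y (par t) := fun t h h' => h (desc_of_par h')
  have hNpar : ∀ t, Desc par y t → t ≠ y → f t ∈ A → f (par t) ∈ A := fun t h1 h2 h3 =>
    (hcl t h1 h2 f hf ⟨t, desc_refl _, h3⟩).2.1
  set S : Finset W := univ.filter (fun t => ¬ Desc par y t) with hS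
  have memS : ∀ t, t ∈ S ↔ ¬ Desc par y t := fun t => by simp [hS]
  set U2 : Finset V := (U \ A) \ S.image f with hU2
  have memU2 : ∀ x, x ∈ U2 ↔ x ∈ U ∧ x ∉ A ∧ ∀ t, ¬ Desc par y t → f t ≠ x := fun x => by
    simp [hU2, memS]; tauto
  set Ny : Finset W := univ.filter (fun t => Desc par y t ∧ f t ∈ A) with hNy
  have memNy : ∀ t, t ∈ Ny ↔ Desc par y t ∧ f t ∈ A := fun t => by simp [hNy]
  set Sl : Finset W := univ.filter (fun t => Desc par y t ∧ f t ∉ A ∧ f (par t) ∈ A) with hSl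
  have memSl : ∀ t, t ∈ Sl ↔ Desc par y t ∧ f t ∉ A ∧ f (par t) ∈ A := fun t => by simp [hSl]
  have Slne : ∀ t ∈ Sl, t ≠ y ∧ t ≠ r ∧ Desc par y (par t) := by
    intro t ht
    obtain ⟨h1, h2, h3⟩ := (memSl t).1 ht
    have h4 : t ≠ y := by rintro rfl; exact h2 hyA
    refine ⟨h4, ?_, desc_step h1 h4⟩
    rintro rfl
    exact h4 (desc_r hr h1).symm
  let F : W → Finset V := fun t => U2.filter (G.Adj (f (par t)))
  have memF : ∀ t x, x ∈ F t ↔ x ∈ U2 ∧ G.Adj (f (par t)) x := fun t x => by simp [F]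
  obtain ⟨Q, hQSl, hQW, hQfree⟩ := hall_tight Sl F f (fun a _ b _ h => finj h) (by
    intro t ht
    obtain ⟨h1, h2, h3⟩ := (memSl t).1 ht
    refine (memF _ _).2 ⟨(memU2 _).2 ⟨hf.2 t, h2, fun s hs hst => ?_⟩, fadj t (Slne t ht).2.1⟩
    exact hs (finj hst ▸ h1))
  set X : Finset V := U2 \ Q.biUnion F with hX
  have memX : ∀ x, x ∈ X ↔ x ∈ U2 ∧ x ∉ Q.biUnion F := fun x => by simp [hX]
  have hwX : w ∈ X := by
    refine (memX _).2 ⟨(memU2 _).2 ⟨hwU, hwA, fun t _ => hw t⟩, ?_⟩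
    rw [hQW]
    intro h
    obtain ⟨t, _, ht⟩ := mem_image.1 h
    exact hw t ht
  -- freeing
  have hfree : ∀ u ∈ X, ∃ f', IsCopy G par r U f' ∧ (∀ t, f t ∈ A → f' t = f t) ∧
      ∀ t, f' t ≠ u := by
    intro u hu
    obtain ⟨huU2, huQ⟩ := (memX u).1 hu
    obtain ⟨h, hinj, hh⟩ := hQfree u huQ
    let K : Finset W := S ∪ Ny ∪ Sl
    have memK : ∀ t, t ∈ K ↔ ¬ Desc par y t ∨ (Desc par y t ∧ f t ∈ A) ∨ t ∈ Sl := fun t => by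
      simp only [K, mem_union, memS, memNy, or_assoc]
    let g : W → V := fun t => if t ∈ Sl then h t else f t
    have g1 : ∀ t ∈ Sl, g t = h t := fun t ht => by simp [g, ht]
    have g2 : ∀ t, t ∉ Sl → g t = f t := fun t ht => by simp [g, ht]
    have gA : ∀ t, f t ∈ A → g t = f t := fun t ht => g2 t fun h => ((memSl t).1 h).2.1 ht
    have gS : ∀ t, ¬ Desc par y t → g t = f t := fun t ht => g2 t fun h => ht ((memSl t).1 h).1
    have hhU2 : ∀ t ∈ Sl, h t ∈ U2 := fun t ht => ((memF _ _).1 (hh t ht).1).1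
    have hKp : ∀ t ∈ K, par t ∈ K := by
      intro t ht
      rcases (memK t).1 ht with h1 | ⟨h1, h2⟩ | h1
      · exact (memK _).2 (Or.inl (hparS t h1))
      · by_cases hty : t = y
        · subst hty
          by_cases htr : t = r
          · rw [htr, hr, ← htr]; exact ht
          · exact (memK _).2 (Or.inl (par_not_desc hr hd htr))
        · exact (memK _).2 (Or.inr (Or.inl ⟨desc_step h1 hty, hNpar t h1 hty h2⟩))
      · exact (memK _).2 (Or.inr (Or.inl ⟨(Slne t h1).2.2, ((memSl t).1 h1).2.2⟩))
    have hmix : ∀ a ∈ Sl, ∀ b ∈ K, b ∉ Sl → g a ≠ g b := by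
      intro a ha b hb hbS hab
      rw [g1 a ha, g2 b hbS] at hab
      have h3 := (memU2 _).1 (hhU2 a ha)
      rcases (memK b).1 hb with h1 | h1 | h1
      · exact h3.2.2 b h1 hab.symm
      · exact h3.2.1 (hab ▸ h1.2)
      · exact hbS h1
    have hval : Valid G par r K g := by
      refine ⟨?_, ?_⟩
      · intro a ha b hb hab
        simp only [mem_coe] at ha hb
        by_cases h1 : a ∈ Sl <;> by_cases h2 : b ∈ Sl
        · rw [g1 a h1, g1 b h2] at hab; exact hinj h1 h2 hab
        · exact absurd hab (hmix a h1 b hb h2)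
        · exact absurd hab.symm (hmix b h2 a ha h1)
        · rw [g2 a h1, g2 b h2] at hab; exact finj hab
      · intro t ht htr
        rcases (memK t).1 ht with h1 | ⟨h1, h2⟩ | h1
        · rw [gS t h1, gS _ (hparS t h1)]; exact fadj t htr
        · rw [gA t h2]
          by_cases hty : t = y
          · rw [gS _ (by subst hty; exact par_not_desc hr hd htr)]; exact fadj t htr
          · rw [gA _ (hNpar t h1 hty h2)]; exact fadj t htr
        · rw [g1 t h1, gA _ ((memSl t).1 h1).2.2]
          exact ((memF _ _).1 (hh t h1).1).2
    have hrK : r ∈ K := by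
      by_cases hyr : y = r
      · subst hyr
        exact (memK _).2 (Or.inr (Or.inl ⟨desc_refl _, hyA⟩))
      · exact (memK _).2 (Or.inl fun h => hyr (desc_r hr h))
    obtain ⟨f', hv', hK', hX'⟩ := ext_lemma G hd K univ (subset_univ _) hrK hKp
      (fun _ _ => mem_univ _) ((U \ A).erase u) g hval (by
        intro B v hvB hBc hKB hsrc
        have hv : v ∈ U ∧ v ∉ A := by
          obtain ⟨t, -, htK, h1 | h1⟩ := hsrc
          · obtain ⟨hp, rfl⟩ := h1
            have h2 : Desc par y t ∧ f t ∉ A ∧ t ∉ Sl := by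
              have := (memK t).not.1 htK
              push Not at this
              exact ⟨this.1, this.2.1 this.1, this.2.2⟩
            have hty : t ≠ y := by rintro rfl; exact h2.2.1 hyA
            have h3 : Desc par y (par t) := desc_step h2.1 hty
            rcases (memK _).1 hp with h4 | h4 | h4
            · exact absurd h3 h4
            · exact absurd ((memSl t).2 ⟨h2.1, h2.2.1, h4.2⟩) h2.2.2
            · rw [g1 _ h4]
              have := (memU2 _).1 (hhU2 _ h4)
              exact ⟨this.1, this.2.1⟩
          · have := h1.2
            simp at this
            exact this.2
        obtain ⟨x, hxU, hxB, hxu, hadj⟩ := count_one G U B v u d hvB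
          (by rwa [card_univ, hcard] at hBc) (hdeg v hv.1 hv.2)
        refine ⟨x, ?_, hxB, hadj⟩
        simp only [mem_erase, mem_sdiff]
        refine ⟨hxu, hxU, fun hxA => hxB ?_⟩
        obtain ⟨t, rfl⟩ := hcover f hf x hxA
        apply hKB
        refine mem_image.2 ⟨t, (memK t).2 ?_, gA t hxA⟩
        by_cases h : Desc par y t
        · exact Or.inr (Or.inl ⟨h, hxA⟩)
        · exact Or.inl h)
    have hbas : ∀ t, f' t ∈ U ∧ f' t ≠ u := by
      intro t
      by_cases ht : t ∈ K
      · rw [hK' t ht]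
        have hu' := (memU2 u).1 huU2
        rcases (memK t).1 ht with h1 | h1 | h1
        · rw [gS t h1]; exact ⟨hf.2 t, hu'.2.2 t h1⟩
        · rw [gA t h1.2]; exact ⟨hf.2 t, fun he => hu'.2.1 (he ▸ h1.2)⟩
        · rw [g1 t h1]; exact ⟨((memU2 _).1 (hhU2 t h1)).1, (hh t h1).2⟩
      · have := hX' t (mem_univ _) ht
        simp at this
        exact ⟨this.2.1, this.1⟩
    refine ⟨f', ⟨hv', fun t => (hbas t).1⟩, ?_, fun t => (hbas t).2⟩
    intro t htA
    have htK : t ∈ K := by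
      refine (memK t).2 ?_
      by_cases h : Desc par y t
      · exact Or.inr (Or.inl ⟨h, htA⟩)
      · exact Or.inl h
    rw [hK' t htK, gA t htA]
  -- the antichain J
  set J : Finset W := Q ∪ Ny.filter (fun p => (∀ c, c ≠ r → par c = p → f c ∉ A) ∧
    ∀ c ∈ Q, par c ≠ p) with hJ
  have memJ : ∀ j, j ∈ J ↔ j ∈ Q ∨ ((Desc par y j ∧ f j ∈ A) ∧
      (∀ c, c ≠ r → par c = j → f c ∉ A) ∧ ∀ c ∈ Q, par c ≠ j) := fun j => by
    simp only [hJ, mem_union, mem_filter, memNy]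
  have hJy : ∀ j ∈ J, Desc par y j := by
    intro j hj
    rcases (memJ j).1 hj with h | h
    · exact ((memSl j).1 (hQSl h)).1
    · exact h.1.1
  have hanti : ∀ j ∈ J, ∀ j' ∈ J, Desc par j' j → j = j' := by
    intro j hj j' hj' hdesc
    by_contra hne
    have hjN : (f j ∈ A) ∨ (j ∈ Q ∧ f (par j) ∈ A) := by
      rcases (memJ j).1 hj with h | h
      · exact Or.inr ⟨h, ((memSl j).1 (hQSl h)).2.2⟩
      · exact Or.inl h.1.2
    rcases (memJ j').1 hj' with h | h
    · have h1 := (memSl j').1 (hQSl h)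
      have h2 := (Slne j' (hQSl h)).1
      refine h1.2.1 (hcl j' h1.1 h2 f hf ?_).1
      rcases hjN with h3 | h3
      · exact ⟨j, hdesc, h3⟩
      · exact ⟨par j, desc_step hdesc hne, h3.2⟩
    · obtain ⟨c, c1, c2, c3, c4⟩ := exists_child hr hdesc hne
      have hyc : Desc par y c := desc_of_par (c3 ▸ h.1.1)
      have hcy : c ≠ y := by
        rintro rfl
        exact par_not_desc hr hd c1 (c3 ▸ h.1.1)
      refine h.2.1 c c1 c3 (hcl c hyc hcy f hf ?_).1
      rcases hjN with h3 | h3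
      · exact ⟨j, c4, h3⟩
      · have hjc : j ≠ c := by
          rintro rfl
          exact h.2.2 j h3.1 c3
        exact ⟨par j, desc_step c4 hjc, h3.2⟩
  have hbad : ∀ u ∈ X, ∀ x ∈ U, G.Adj u x → x ∉ X → (∀ t, ¬ Desc par y t → f t ≠ x) →
      x ∈ J.image f := by
    intro u hu x hxU hadj hxX hxS
    by_cases hxA : x ∈ A
    · obtain ⟨p, rfl⟩ := hcover f hf x hxA
      have hyp : Desc par y p := by
        by_contra h
        exact hxS p h rfl
      refine mem_image_of_mem _ ((memJ p).2 (Or.inr ⟨⟨hyp, hxA⟩, ?_, ?_⟩))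
      · intro c c1 c2 c3
        obtain ⟨f', k1, k2, k3⟩ := hfree u hu
        have hyc : Desc par y c := desc_of_par (c2 ▸ hyp)
        have hcy : c ≠ y := by
          rintro rfl
          exact par_not_desc hr hd c1 (c2 ▸ hyp)
        have := (hcl c hyc hcy f' k1 ⟨c, desc_refl _, (k2 c c3) ▸ c3⟩).2.2 u
          ((memU2 _).1 ((memX _).1 hu).1).1 k3
        rw [c2, k2 p hxA] at this
        exact this hadj.symm
      · intro c c1 c2
        apply ((memX _).1 hu).2
        exact mem_biUnion.2 ⟨c, c1, (memF _ _).2 ⟨((memX _).1 hu).1, c2 ▸ hadj.symm⟩⟩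
    · have h1 : x ∈ Q.biUnion F := by
        by_contra h
        exact hxX ((memX _).2 ⟨(memU2 _).2 ⟨hxU, hxA, hxS⟩, h⟩)
      rw [hQW] at h1
      obtain ⟨t, ht, rfl⟩ := mem_image.1 h1
      exact mem_image_of_mem _ ((memJ t).2 (Or.inl ht))
  -- leaves
  have hleaf : ∀ j, ∃ l, Desc par j l ∧ ∀ t, t ≠ r → par t ≠ l := by
    intro j
    obtain ⟨l, hl, hmax⟩ := exists_max_image (univ.filter (Desc par j)) dep
      ⟨j, by simp [desc_refl]⟩
    simp only [mem_filter, mem_univ, true_and] at hl hmax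
    refine ⟨l, hl, ?_⟩
    rintro t htr rfl
    have := hmax t (desc_of_par hl)
    have := hd t htr
    omega
  choose lf hlf1 hlf2 using hleaf
  set L : Finset W := J.image lf with hL
  have hLcard : L.card = J.card := by
    apply card_image_of_injOn
    intro a ha b hb hab
    have h1 := hlf1 a
    rw [hab] at h1
    rcases desc_comp h1 (hlf1 b) with h | h
    · exact (hanti b hb a ha h).symm
    · exact hanti a ha b hb h
  have hLy : ∀ t ∈ L, Desc par y t ∧ ∀ s, s ≠ r → par s ≠ t := by
    intro t ht
    obtain ⟨j, hj, rfl⟩ := mem_image.1 ht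
    exact ⟨desc_trans (hJy j hj) (hlf1 j), hlf2 j⟩
  -- first phase
  let K1 : Finset W := insert y S
  let K2 : Finset W := insert y (univ \ L)
  have memK1 : ∀ t, t ∈ K1 ↔ t = y ∨ ¬ Desc par y t := fun t => by simp [K1, memS]
  have memK2 : ∀ t, t ∈ K2 ↔ t = y ∨ t ∉ L := fun t => by simp [K2]
  have hK12 : K1 ⊆ K2 := by
    intro t ht
    refine (memK2 t).2 (((memK1 t).1 ht).imp id fun h h' => h (hLy t h').1)
  have hrK1 : r ∈ K1 := by
    by_cases hyr : y = r
    · exact (memK1 r).2 (Or.inl hyr.symm)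
    · exact (memK1 r).2 (Or.inr fun h => hyr (desc_r hr h))
  have hK1p : ∀ t ∈ K1, par t ∈ K1 := by
    intro t ht
    by_cases htr : t = r
    · rw [htr, hr]; exact hrK1
    · rcases (memK1 t).1 ht with rfl | h
      · exact (memK1 _).2 (Or.inr (par_not_desc hr hd htr))
      · exact (memK1 _).2 (Or.inr (hparS t h))
  have hK2p : ∀ t ∈ K2, par t ∈ K2 := by
    intro t ht
    by_cases htr : t = r
    · rw [htr, hr]; exact hK12 hrK1
    · exact (memK2 _).2 (Or.inr fun h => (hLy _ h).2 t htr rfl)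
  have hK2card : K2.card + J.card ≤ d + 1 := by
    have h1 := card_insert_le y (univ \ L)
    have h2 := card_sdiff_add_card_eq_card (subset_univ L)
    rw [card_univ, hcard] at h2
    have h3 : K2.card = (insert y (univ \ L)).card := rfl
    omega
  let g : W → V := Function.update f y w
  have gy : g y = w := Function.update_self _ _ _
  have gne : ∀ t, t ≠ y → g t = f t := fun t h => Function.update_of_ne h _ _
  have gS : ∀ t, ¬ Desc par y t → g t = f t := fun t h => gne t (by
    rintro rfl; exact h (desc_refl _))
  have hgval : Valid G par r K1 g := by
    refine ⟨?_, ?_⟩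
    · intro a _ b _ hab
      by_cases h1 : a = y <;> by_cases h2 : b = y
      · rw [h1, h2]
      · rw [h1, gy, gne b h2] at hab; exact absurd hab.symm (hw b)
      · rw [h2, gy, gne a h1] at hab; exact absurd hab (hw a)
      · rw [gne a h1, gne b h2] at hab; exact finj hab
    · intro t ht htr
      rcases (memK1 t).1 ht with rfl | h
      · rw [gy, gS _ (par_not_desc hr hd htr)]; exact hwadj htr
      · rw [gS t h, gS _ (hparS t h)]; exact fadj t htr
  have hXU : ∀ x ∈ X, x ∈ U ∧ x ∉ A := fun x hx =>
    have := (memU2 _).1 ((memX _).1 hx).1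
    ⟨this.1, this.2.1⟩
  obtain ⟨g2, g2v, g2K, g2X⟩ := ext_lemma G hd K1 K2 hK12 hrK1 hK1p hK2p X g hgval (by
    intro B u huB hBc hKB hsrc
    have huX : u ∈ X := by
      obtain ⟨t, ht2, ht1, h | h⟩ := hsrc
      · obtain ⟨hp, rfl⟩ := h
        have h1 := (memK1 t).not.1 ht1
        push Not at h1
        have h2 : par t = y := by
          rcases (memK1 _).1 hp with h | h
          · exact h
          · exact absurd (desc_step h1.2 h1.1) h
        rw [h2, gy]; exact hwX
      · exact h.2
    by_contra hcon
    push Not at hcon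
    have hsub : U.filter (G.Adj u) ⊆ B.erase u ∪ J.image f := by
      intro x hx
      obtain ⟨h1, h2⟩ := mem_filter.1 hx
      by_cases hxB : x ∈ B
      · exact mem_union_left _ (mem_erase.2 ⟨h2.ne.symm, hxB⟩)
      · refine mem_union_right _ (hbad u huX x h1 h2 (fun hxX => hcon x hxX hxB h2) ?_)
        rintro t ht rfl
        exact hxB (hKB (mem_image.2 ⟨t, (memK1 t).2 (Or.inr ht), gS t ht⟩))
    have h1 := card_le_card hsub
    have h2 := card_union_le (B.erase u) (J.image f)
    have h3 := card_erase_of_mem huB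
    have h4 : (J.image f).card ≤ J.card := card_image_le
    have h5 := hdeg u (hXU u huX).1 (hXU u huX).2
    have h6 : 0 < B.card := card_pos.2 ⟨u, huB⟩
    omega)
  have g2y : g2 y = w := by rw [g2K y ((memK1 y).2 (Or.inl rfl)), gy]
  obtain ⟨g3, g3v, g3K, g3X⟩ := ext_lemma G hd K2 univ (subset_univ _) (hK12 hrK1) hK2p
    (fun _ _ => mem_univ _) (U.erase (f y)) g2 g2v (by
    intro B u huB hBc _ hsrc
    have huX : u ∈ X := by
      obtain ⟨t, -, ht2, h⟩ := hsrc
      have h1 := (memK2 t).not.1 ht2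
      push Not at h1
      have htr : t ≠ r := by
        rintro rfl; exact ht2 (hK12 hrK1)
      have h3 : par t ∈ K2 := (memK2 _).2 (Or.inr fun h => (hLy _ h).2 t htr rfl)
      rcases h with ⟨-, rfl⟩ | h
      · by_cases h4 : par t = y
        · rw [h4, g2y]; exact hwX
        · refine g2X _ h3 fun h5 => ?_
          rcases (memK1 _).1 h5 with h6 | h6
          · exact h4 h6
          · exact h6 (desc_step (hLy t h1.2).1 h1.1)
      · exact absurd h3 h.1
    obtain ⟨x, h1, h2, h3, h4⟩ := count_one G U B u (f y) d huB
      (by rwa [card_univ, hcard] at hBc) (hdeg u (hXU u huX).1 (hXU u huX).2)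
    exact ⟨x, mem_erase.2 ⟨h3, h1⟩, h2, h4⟩)
  have hfin : ∀ t, g3 t ∈ U ∧ g3 t ≠ f y := by
    intro t
    by_cases h2 : t ∈ K2
    · rw [g3K t h2]
      by_cases h1 : t ∈ K1
      · rw [g2K t h1]
        rcases (memK1 t).1 h1 with rfl | h
        · rw [gy]; exact ⟨hwU, (hw t).symm⟩
        · rw [gS t h]
          exact ⟨hf.2 t, fun he => h (finj he ▸ desc_refl _)⟩
      · have := hXU _ (g2X t h2 h1)
        exact ⟨this.1, fun he => this.2 (he ▸ hyA)⟩
    · have := mem_erase.1 (g3X t (mem_univ _) h2)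
      exact ⟨this.2, this.1⟩
  obtain ⟨t, ht⟩ := hcover g3 ⟨g3v, fun t => (hfin t).1⟩ (f y) hyA
  exact (hfin t).2 ht

open Classical in
lemma main_abs {V W : Type*} [Fintype W] (G : SimpleGraph V)
    {par : W → W} {dep : W → ℕ} {r : W} (hr : par r = r)
    (hd : ∀ t, t ≠ r → dep (par t) < dep t)
    (U A : Finset V) (d : ℕ) (hcard : Fintype.card W = d) (hAne : A.Nonempty)
    (hdeg : ∀ v ∈ U, v ∉ A → d ≤ (U.filter (G.Adj v)).card)
    (hcover : ∀ f, IsCopy G par r U f → ∀ a ∈ A, ∃ t, f t = a)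
    (f : W → V) (hf : IsCopy G par r U f) (w : V) (hwU : w ∈ U) : ∃ t, f t = w := by
  have claim : ∀ (n : ℕ) (c : W), (univ.filter (Desc par c)).card = n → c ≠ r →
      ∀ f, IsCopy G par r U f →
      (∃ t, Desc par c t ∧ f t ∈ A) → f c ∈ A ∧ f (par c) ∈ A ∧
        ∀ x ∈ U, (∀ t, f t ≠ x) → ¬ G.Adj (f (par c)) x := by
    intro n
    induction n using Nat.strong_induction_on with
    | _ n ih =>
      intro c hn hcr f hf hN
      have hsub : ∀ e, Desc par c e → e ≠ c → ∀ f, IsCopy G par r U f →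
          (∃ t, Desc par e t ∧ f t ∈ A) → f e ∈ A ∧ f (par e) ∈ A ∧
          ∀ x ∈ U, (∀ t, f t ≠ x) → ¬ G.Adj (f (par e)) x := by
        intro e h1 h2
        refine ih _ ?_ e rfl ?_
        · rw [← hn]
          apply card_lt_card
          refine ⟨fun t ht => ?_, fun h => ?_⟩
          · simp only [mem_filter, mem_univ, true_and] at ht ⊢
            exact desc_trans h1 ht
          · have h3 : c ∈ univ.filter (Desc par e) := h (by simp [desc_refl])
            simp only [mem_filter, mem_univ, true_and] at h3
            have h4 := desc_dep hr hd h3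
            have h5 := desc_dep_lt hr hd h1 h2
            omega
        · rintro rfl
          exact hcr (desc_r hr h1)
      have hno : ∀ x ∈ U, (∀ t, f t ≠ x) → ¬ G.Adj (f (par c)) x := fun x hxU hx hadj =>
        core G hr hd U A d hcard hdeg hcover c hsub f hf hN x hxU hx fun _ => hadj
      refine ⟨?_, ?_, hno⟩
      · obtain ⟨t, ht, htA⟩ := hN
        by_cases htc : t = c
        · exact htc ▸ htA
        · obtain ⟨e, h1, h2, h3, h4⟩ := exists_child hr ht htc
          have := (hsub e (desc_of_par (h3 ▸ desc_refl _)) h2 f hf ⟨t, h4, htA⟩).2.1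
          rwa [h3] at this
      · by_contra hpA
        have h1 := hdeg _ (hf.2 (par c)) hpA
        have hsub2 : U.filter (G.Adj (f (par c))) ⊆ (univ.image f).erase (f (par c)) := by
          intro x hx
          obtain ⟨h2, h3⟩ := mem_filter.1 hx
          refine mem_erase.2 ⟨h3.ne.symm, ?_⟩
          by_contra h4
          refine hno x h2 (fun t ht => h4 (mem_image.2 ⟨t, mem_univ _, ht⟩)) h3
        have h2 := card_le_card hsub2
        rw [card_erase_of_mem (mem_image_of_mem _ (mem_univ _))] at h2
        have h3 : (univ.image f).card ≤ d := by
          rw [← hcard, ← card_univ]; exact card_image_le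
        have h4 : 0 < (univ.image f).card := card_pos.2 ⟨f c, mem_image_of_mem _ (mem_univ _)⟩
        omega
  by_contra hcon
  push Not at hcon
  obtain ⟨a, ha⟩ := hAne
  obtain ⟨t, ht⟩ := hcover f hf a ha
  refine core G hr hd U A d hcard hdeg hcover r ?_ f hf ⟨t, root_desc hd t, ht ▸ ha⟩ w hwU hcon
    (fun h => absurd rfl h)
  intro c _ hc
  exact claim _ c rfl hc

end main

end NST

theorem stmt_7 {V W : Type*} [Fintype V] [DecidableEq V] [Fintype W]
    (G : SimpleGraph V) [DecidableRel G.Adj] (d : ℕ) (hd : 1 ≤ d)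
    (hGconn : G.Connected) (hδ : ∀ v : V, d ≤ G.degree v)
    (T : SimpleGraph W) (hT : T.IsTree) (hTcard : Fintype.card W = d) :
    ∃ f : W → V, Function.Injective f ∧
      (∀ a b : W, T.Adj a b → G.Adj (f a) (f b)) ∧
      (G.induce ((Set.range f)ᶜ)).Connected := by
  classical
  obtain ⟨r, par, dep, hr, hdep, hTadj⟩ := NST.exists_rooted T hT
  have hδ' : ∀ v, d ≤ (Finset.univ.filter (G.Adj v)).card := by
    intro v
    have h := hδ v
    rw [← SimpleGraph.card_neighborFinset_eq_degree, SimpleGraph.neighborFinset_eq_filter] at h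
    convert h
  let 𝒞 : Finset (Finset V) := Finset.univ.filter fun C =>
    (G.induce (C : Set V)).Connected ∧ ∃ f, NST.IsCopy G par r Cᶜ f
  have h𝒞 : 𝒞.Nonempty := by
    obtain ⟨v0⟩ := hGconn.nonempty
    have h0 : 0 < (Finset.univ.filter (G.Adj v0)).card := lt_of_lt_of_le hd (hδ' v0)
    obtain ⟨v1, hv1⟩ := Finset.card_pos.1 h0
    have hv1' : G.Adj v0 v1 := by simpa using hv1
    refine ⟨{v0}, ?_⟩
    simp only [𝒞, Finset.mem_filter, Finset.mem_univ, true_and]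
    refine ⟨?_, ?_⟩
    · rw [Finset.coe_singleton]
      exact SimpleGraph.Connected.mk (SimpleGraph.Preconnected.of_subsingleton)
    · obtain ⟨f, h1, h2, h3⟩ := NST.ext_lemma G hdep {r} Finset.univ (Finset.subset_univ _) (by simp)
        (by simp [hr]) (fun _ _ => Finset.mem_univ _) (Finset.univ.erase v0) (fun _ => v1)
        ⟨by simp, by intro t ht htr; simp at ht; exact absurd ht htr⟩ (by
          intro B u hu hB _ _
          obtain ⟨x, h1, h2, h3, h4⟩ := NST.count_one G Finset.univ B u v0 d hu
            (by rwa [Finset.card_univ, hTcard] at hB) (by convert hδ' u)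
          exact ⟨x, by simp [h3], h2, h4⟩)
      refine ⟨f, h1, fun t => ?_⟩
      by_cases ht : t = r
      · rw [h2 t (by simp [ht])]; simp [hv1'.ne.symm]
      · have := h3 t (by simp) (by simp [ht])
        simpa using this
  obtain ⟨C, hC, hmax⟩ := Finset.exists_max_image 𝒞 Finset.card h𝒞
  simp only [𝒞, Finset.mem_filter, Finset.mem_univ, true_and] at hC hmax
  obtain ⟨hCconn, f, hf⟩ := hC
  let A : Finset V := Cᶜ.filter fun v => ∃ c ∈ C, G.Adj c v
  have hAne : A.Nonempty := by
    obtain ⟨⟨c, hc⟩⟩ := hCconn.nonempty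
    have hx := hf.2 r
    obtain ⟨p⟩ := hGconn.preconnected c (f r)
    obtain ⟨e, he, h1, h2⟩ := p.exists_boundary_dart (C : Set V) hc (by simpa using hx)
    refine ⟨e.snd, ?_⟩
    simp only [A, Finset.mem_filter, Finset.mem_compl]
    exact ⟨by simpa using h2, e.fst, by simpa using h1, e.adj⟩
  have hall := NST.main_abs G hr hdep Cᶜ A d hTcard hAne (by
      intro v hv hvA
      refine (hδ' v).trans (Finset.card_le_card ?_)
      intro x hx
      simp only [Finset.mem_filter, Finset.mem_univ, true_and] at hx ⊢
      refine ⟨?_, hx⟩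
      rw [Finset.mem_compl]
      intro hxC
      apply hvA
      simp only [A, Finset.mem_filter]
      exact ⟨hv, x, hxC, hx.symm⟩) (by
      intro f' hf' a ha
      by_contra hcon
      push Not at hcon
      simp only [A, Finset.mem_filter, Finset.mem_compl] at ha
      obtain ⟨haC, c, hc, hca⟩ := ha
      have h1 := hmax (insert a C) ⟨?_, f', hf'.1, fun t => ?_⟩
      · rw [Finset.card_insert_of_notMem haC] at h1
        omega
      · have h2 := SimpleGraph.induce_union_connected hCconn.preconnected
          (SimpleGraph.induce_pair_connected_of_adj hca).preconnected
          (⟨c, by simpa using hc, by simp⟩)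
        have h3 : ((insert a C : Finset V) : Set V) = (C : Set V) ∪ {c, a} := by
          ext x
          simp only [Finset.coe_insert, Set.mem_insert_iff, Set.mem_union, Finset.mem_coe,
            Set.mem_singleton_iff]
          constructor
          · tauto
          · rintro (h | rfl | h) <;> tauto
        rw [h3]; exact h2
      · have := hf'.2 t
        simp only [Finset.mem_compl, Finset.mem_insert, not_or] at this ⊢
        exact ⟨hcon t, this⟩) f hf
  refine ⟨f, fun a b hab => hf.1.1 (by simp) (by simp) hab, ?_, ?_⟩
  · intro a b hab
    rcases hTadj a b hab with ⟨h1, rfl⟩ | ⟨h1, rfl⟩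
    · exact hf.1.2 b (by simp) h1
    · exact (hf.1.2 a (by simp) h1).symm
  · have : (Set.range f)ᶜ = (C : Set V) := by
      ext x
      simp only [Set.mem_compl_iff, Set.mem_range, Finset.mem_coe]
      constructor
      · intro h
        by_contra hx
        exact h (hall x (by simpa using hx))
      · rintro hx ⟨t, rfl⟩
        have := hf.2 t
        simp at this
        exact this hx
    rw [this]
    exact hCconn
end

section
/- Every k-connected finite simple graph G with minimum degree δ(G) ≥ ⌊3k/2⌋ + 2 contains an edge xy such that G − {x, y} is still k-connected. -/
structure Sepn {V : Type*} (G : SimpleGraph V) (A S B : Finset V) : Prop where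
  nA : A.Nonempty
  nB : B.Nonempty
  cov : ∀ v, v ∈ A ∨ v ∈ S ∨ v ∈ B
  dAS : ∀ v, v ∈ A → v ∉ S
  dAB : ∀ v, v ∈ A → v ∉ B
  dSB : ∀ v, v ∈ S → v ∉ B
  nadj : ∀ a ∈ A, ∀ b ∈ B, ¬ G.Adj a b

set_option linter.unusedSectionVars false

namespace Sepn
variable {V : Type*} [Fintype V] [DecidableEq V] {G : SimpleGraph V} {A S B A' S' B' : Finset V}

theorem symm (h : Sepn G A S B) : Sepn G B S A :=
  ⟨h.nB, h.nA, fun v => by have := h.cov v; tauto, fun v hv hs => h.dSB v hs hv,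
    fun v hv hs => h.dAB v hs hv, fun v hv hs => h.dAS v hs hv,
    fun a ha b hb hab => h.nadj b hb a ha hab.symm⟩

theorem corner (h : Sepn G A S B) (h' : Sepn G A' S' B') (hn : (A ∩ A').Nonempty) :
    Sepn G (A ∩ A') ((A ∩ S') ∪ ((S ∩ S') ∪ (S ∩ A'))) (B ∪ B') := by
  refine ⟨hn, h.nB.mono Finset.subset_union_left, ?_, ?_, ?_, ?_, ?_⟩
  · intro v
    have := h.cov v; have := h'.cov v
    simp only [Finset.mem_inter, Finset.mem_union]; tauto
  · intro v
    have := h.dAS v; have := h'.dAS v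
    simp only [Finset.mem_inter, Finset.mem_union]; tauto
  · intro v
    have := h.dAB v; have := h'.dAB v
    simp only [Finset.mem_inter, Finset.mem_union]; tauto
  · intro v
    have := h.dAB v; have := h'.dAB v
    have := h.dSB v; have := h'.dSB v
    simp only [Finset.mem_inter, Finset.mem_union]; tauto
  · intro a ha b hb
    simp only [Finset.mem_inter, Finset.mem_union] at ha hb
    rcases hb with hb | hb
    · exact h.nadj a ha.1 b hb
    · exact h'.nadj a ha.2 b hb

theorem card_corner (A S A' S' : Finset V) :
    ((A ∩ S') ∪ ((S ∩ S') ∪ (S ∩ A'))).card ≤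
      (A ∩ S').card + (S ∩ S').card + (S ∩ A').card := by
  have h1 := Finset.card_union_le (A ∩ S') ((S ∩ S') ∪ (S ∩ A'))
  have h2 := Finset.card_union_le (S ∩ S') (S ∩ A')
  omega

theorem card_split (h : Sepn G A S B) (X : Finset V) :
    X.card = (X ∩ A).card + (X ∩ S).card + (X ∩ B).card := by
  have e : X = (X ∩ A) ∪ ((X ∩ S) ∪ (X ∩ B)) := by
    ext v; have := h.cov v
    simp only [Finset.mem_inter, Finset.mem_union]; tauto
  have d2 : Disjoint (X ∩ S) (X ∩ B) := by
    rw [Finset.disjoint_left]; intro v; have := h.dSB v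
    simp only [Finset.mem_inter]; tauto
  have d1 : Disjoint (X ∩ A) ((X ∩ S) ∪ (X ∩ B)) := by
    rw [Finset.disjoint_left]; intro v; have := h.dAS v; have := h.dAB v
    simp only [Finset.mem_inter, Finset.mem_union]; tauto
  conv_lhs => rw [e]
  rw [Finset.card_union_of_disjoint d1, Finset.card_union_of_disjoint d2]
  omega

theorem deg [DecidableRel G.Adj] (h : Sepn G A S B) {d : ℕ} (hd : ∀ v, d ≤ G.degree v) :
    d + 1 ≤ A.card + S.card := by
  obtain ⟨a, ha⟩ := h.nA
  have h1 : G.neighborFinset a ⊆ (A.erase a) ∪ S := by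
    intro v hv
    rw [SimpleGraph.mem_neighborFinset] at hv
    have := h.cov v
    have h3 : v ∉ B := fun hb => h.nadj a ha v hb hv
    have h4 : v ≠ a := hv.ne'
    simp only [Finset.mem_union, Finset.mem_erase]; tauto
  have h2 := (Finset.card_le_card h1).trans (Finset.card_union_le _ _)
  rw [SimpleGraph.card_neighborFinset_eq_degree, Finset.card_erase_of_mem ha] at h2
  have := hd a
  have : 0 < A.card := Finset.card_pos.2 ⟨a, ha⟩
  omega

theorem shrink (h : Sepn G A S B) {s : V} (hs : s ∈ S) (hn : ∀ a ∈ A, ¬ G.Adj a s) :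
    Sepn G A (S.erase s) (insert s B) := by
  refine ⟨h.nA, ⟨s, by simp⟩, ?_, ?_, ?_, ?_, ?_⟩
  · intro v; have := h.cov v
    simp only [Finset.mem_erase, Finset.mem_insert]; tauto
  · intro v hv; have := h.dAS v hv
    simp only [Finset.mem_erase]; tauto
  · intro v hv hv'
    rcases Finset.mem_insert.1 hv' with rfl | hb
    · exact h.dAS _ hv hs
    · exact h.dAB _ hv hb
  · intro v; have := h.dSB v
    simp only [Finset.mem_erase, Finset.mem_insert]; tauto
  · intro a ha b hb
    rcases Finset.mem_insert.1 hb with rfl | hb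
    · exact hn a ha
    · exact h.nadj a ha b hb

theorem move (h : Sepn G A S B) {s : V} (hn : (A.erase s).Nonempty) (hs : s ∈ A) :
    Sepn G (A.erase s) (insert s S) B := by
  refine ⟨hn, h.nB, ?_, ?_, ?_, ?_, ?_⟩
  · intro v; have := h.cov v
    simp only [Finset.mem_erase, Finset.mem_insert]; tauto
  · intro v; have := h.dAS v
    simp only [Finset.mem_erase, Finset.mem_insert]; tauto
  · intro v; have := h.dAB v
    simp only [Finset.mem_erase]; tauto
  · intro v hv
    rcases Finset.mem_insert.1 hv with rfl | hb
    · exact h.dAB _ hs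
    · exact h.dSB _ hb
  · intro a ha b hb
    exact h.nadj a (Finset.mem_of_mem_erase ha) b hb

end Sepn

open Sepn in
theorem ckl {V : Type*} [Fintype V] [DecidableEq V] {G : SimpleGraph V} {j : ℕ}
    (hc : ∀ A S B, Sepn G A S B → j ≤ S.card)
    {F T R : Finset V} (hF : Sepn G F T R) (hT : T.card ≤ j)
    (hmin : ∀ A S B, Sepn G A S B → S.card ≤ j → F.card ≤ A.card)
    (hbig : j < 2 * F.card) {A S B : Finset V} (h : Sepn G A S B) (hS : S.card ≤ j)
    {x : V} (hxF : x ∈ F) (hxS : x ∈ S) : False := by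
  have cT := h.card_split T
  have cF := h.card_split F
  have cR := h.card_split R
  have cS := hF.card_split S
  have cA := hF.card_split A
  have cB := hF.card_split B
  have hR := hmin _ _ _ hF.symm hT
  have hA := hmin _ _ _ h hS
  have hB := hmin _ _ _ h.symm hS
  have e1 := hc _ _ _ h
  have e2 := hc _ _ _ hF
  rw [Finset.inter_comm S F, Finset.inter_comm S T, Finset.inter_comm S R] at cS
  rw [Finset.inter_comm A F, Finset.inter_comm A T, Finset.inter_comm A R] at cA
  rw [Finset.inter_comm B F, Finset.inter_comm B T, Finset.inter_comm B R] at cB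
  have P1 : ∀ {A S B}, Sepn G A S B → x ∈ S → (F ∩ A).Nonempty →
      j + 1 ≤ (F ∩ S).card + (T ∩ S).card + (T ∩ A).card := by
    intro A S B h hxS hn
    by_contra hlt
    have h1 := hmin _ _ _ (hF.corner h hn) (by have := card_corner F T A S; omega)
    have : (F ∩ A).card < F.card := Finset.card_lt_card <| by
      refine ⟨Finset.inter_subset_left, fun hh => ?_⟩
      exact h.dAS x (Finset.mem_inter.1 (hh hxF)).2 hxS
    omega
  have P2 : ∀ {A S B}, Sepn G A S B → (R ∩ A).Nonempty →
      j ≤ (R ∩ S).card + (T ∩ S).card + (T ∩ A).card := by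
    intro A S B h hn
    exact (hc _ _ _ (hF.symm.corner h hn)).trans (card_corner R T A S)
  have a1 := fun hn => P1 h hxS (Finset.card_pos.1 hn)
  have a2 := fun hn => P1 h.symm hxS (Finset.card_pos.1 hn)
  have b1 := fun hn => P2 h (Finset.card_pos.1 hn)
  have b2 := fun hn => P2 h.symm (Finset.card_pos.1 hn)
  omega

open Sepn in
theorem mainCase {V : Type*} [Fintype V] [DecidableEq V] {G : SimpleGraph V}
    [DecidableRel G.Adj] {k : ℕ}
    (hδ : ∀ v : V, 3 * k / 2 + 2 ≤ G.degree v)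
    (hc : ∀ A S B, Sepn G A S B → k ≤ S.card)
    {F T R : Finset V} (hF : Sepn G F T R) (hT : T.card ≤ k)
    (hmin : ∀ A S B, Sepn G A S B → S.card ≤ k → F.card ≤ A.card) :
    ∃ x y : V, G.Adj x y ∧ ∀ A S B, Sepn G A S B → x ∈ S → y ∈ S → k + 2 ≤ S.card := by
  have dF := hF.deg hδ
  have hNo : ∀ {A S B x}, Sepn G A S B → x ∈ F → x ∈ S → k + 1 ≤ S.card := by
    intro A S B x h hxF hxS
    by_contra hlt
    exact ckl hc hF hT hmin (by omega) h (by omega) hxF hxS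
  have hex : ∃ n, ∃ A S B, Sepn G A S B ∧ A ⊂ F ∧ S.card ≤ k + 1 ∧ A.card = n := by
    obtain ⟨x, hx⟩ := hF.nA
    have hn : (F.erase x).Nonempty := by
      rw [← Finset.card_pos, Finset.card_erase_of_mem hx]; omega
    refine ⟨_, _, _, _, hF.move hn hx, Finset.erase_ssubset hx, ?_, rfl⟩
    have := Finset.card_insert_le x T
    omega
  classical
  obtain ⟨A', S', C, h', hA'F, hS', hcard⟩ := Nat.find_spec hex
  have hmin' : ∀ A S B, Sepn G A S B → A ⊂ A' → k + 2 ≤ S.card := by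
    intro A S B h hA
    by_contra hlt
    have h1 := Nat.find_min' hex ⟨A, S, B, h, hA.trans hA'F, by omega, rfl⟩
    have := Finset.card_lt_card hA
    omega
  have hA'lt := Finset.card_lt_card hA'F
  have hS'k : S'.card = k + 1 := by
    by_contra hne
    have := hmin _ _ _ h' (by omega)
    omega
  have hnb : ∀ s ∈ S', ∃ a ∈ A', G.Adj a s := by
    intro s hs
    by_contra hcon
    push Not at hcon
    have := hmin _ _ _ (h'.shrink hs hcon) (by rw [Finset.card_erase_of_mem hs]; omega)
    omega
  have hRC : R ⊆ C := by
    intro v hv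
    rcases h'.cov v with hh | hh | hh
    · exact absurd hv (hF.dAB v (hA'F.1 hh))
    · obtain ⟨a, ha, hav⟩ := hnb v hh
      exact absurd hav (hF.nadj a (hA'F.1 ha) v hv)
    · exact hh
  have hCbig : F.card ≤ C.card :=
    (hmin _ _ _ hF.symm hT).trans (Finset.card_le_card hRC)
  obtain ⟨y, hyS', hyT⟩ : ∃ y ∈ S', y ∉ T := by
    by_contra hcon
    push Not at hcon
    have := Finset.card_le_card (show S' ⊆ T from hcon)
    omega
  obtain ⟨x, hxA', hxy⟩ := hnb y hyS'
  have hyF : y ∈ F := by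
    rcases hF.cov y with hh | hh | hh
    · exact hh
    · exact absurd hh hyT
    · exact absurd hxy (hF.nadj x (hA'F.1 hxA') y hh)
  refine ⟨x, y, hxy, ?_⟩
  intro A S B h hxS hyS
  by_contra hlt
  have hSk : S.card = k + 1 := by
    have := hNo h (hA'F.1 hxA') hxS
    omega
  have dA' := h'.deg hδ
  have dA := h.deg hδ
  have dB := h.symm.deg hδ
  have cT := h.card_split S'
  have cF := h.card_split A'
  have cR := h.card_split C
  have cS := h'.card_split S
  have cA := h'.card_split A
  have cB := h'.card_split B
  rw [Finset.inter_comm S A', Finset.inter_comm S S', Finset.inter_comm S C] at cS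
  rw [Finset.inter_comm A A', Finset.inter_comm A S', Finset.inter_comm A C] at cA
  rw [Finset.inter_comm B A', Finset.inter_comm B S', Finset.inter_comm B C] at cB
  have P1 : ∀ {A S B}, Sepn G A S B → x ∈ S → (A' ∩ A).Nonempty →
      k + 2 ≤ (A' ∩ S).card + (S' ∩ S).card + (S' ∩ A).card := by
    intro A S B h hxS hn
    refine (hmin' _ _ _ (h'.corner h hn) ?_).trans (card_corner A' S' A S)
    refine ⟨Finset.inter_subset_left, fun hh => ?_⟩
    exact h.dAS x (Finset.mem_inter.1 (hh hxA')).2 hxS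
  have P2 : ∀ {A S B}, Sepn G A S B → y ∈ S → (C ∩ A).Nonempty →
      k + 1 ≤ (C ∩ S).card + (S' ∩ S).card + (S' ∩ A).card := by
    intro A S B h hyS hn
    refine (hNo (h'.symm.corner h hn) hyF ?_).trans (card_corner C S' A S)
    simp [hyS, hyS']
  have a1 := fun hn => P1 h hxS (Finset.card_pos.1 hn)
  have a2 := fun hn => P1 h.symm hxS (Finset.card_pos.1 hn)
  have b1 := fun hn => P2 h hyS (Finset.card_pos.1 hn)
  have b2 := fun hn => P2 h.symm hyS (Finset.card_pos.1 hn)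
  clear P1 P2 hmin hmin' hc hδ
  omega

open Sepn in
theorem edgeExists {V : Type*} [Fintype V] [DecidableEq V] {G : SimpleGraph V}
    [DecidableRel G.Adj] {k : ℕ} [Nonempty V]
    (hδ : ∀ v : V, 3 * k / 2 + 2 ≤ G.degree v)
    (hc : ∀ A S B, Sepn G A S B → k ≤ S.card) :
    ∃ x y : V, G.Adj x y ∧ ∀ A S B, Sepn G A S B → x ∈ S → y ∈ S → k + 2 ≤ S.card := by
  classical
  have hmk : ∀ j, (∃ A S B, Sepn G A S B ∧ S.card ≤ j) →
      ∃ F T R, Sepn G F T R ∧ T.card ≤ j ∧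
        ∀ A S B, Sepn G A S B → S.card ≤ j → F.card ≤ A.card := by
    rintro j ⟨A, S, B, h, hS⟩
    have hex : ∃ n, ∃ A S B, Sepn G A S B ∧ S.card ≤ j ∧ A.card = n :=
      ⟨_, A, S, B, h, hS, rfl⟩
    obtain ⟨F, T, R, hF, hT, hcard⟩ := Nat.find_spec hex
    refine ⟨F, T, R, hF, hT, fun A S B h hS => ?_⟩
    rw [hcard]
    exact Nat.find_min' hex ⟨A, S, B, h, hS, rfl⟩
  by_cases h1 : ∃ A S B, Sepn G A S B ∧ S.card ≤ k
  · obtain ⟨F, T, R, hF, hT, hmin⟩ := hmk k h1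
    exact mainCase hδ hc hF hT hmin
  have hc' : ∀ A S B, Sepn G A S B → k + 1 ≤ S.card := by
    intro A S B h
    by_contra hlt
    exact h1 ⟨A, S, B, h, by omega⟩
  have hx : ∃ x : V, ∀ A S B, Sepn G A S B → x ∈ S → k + 2 ≤ S.card := by
    by_cases h2 : ∃ A S B, Sepn G A S B ∧ S.card ≤ k + 1
    · obtain ⟨F, T, R, hF, hT, hmin⟩ := hmk (k + 1) h2
      obtain ⟨x, hx⟩ := hF.nA
      have dF := hF.deg hδ
      refine ⟨x, fun A S B h hxS => ?_⟩
      by_contra hlt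
      exact ckl hc' hF hT hmin (by omega) h (by omega) hx hxS
    · obtain ⟨x⟩ := ‹Nonempty V›
      refine ⟨x, fun A S B h hxS => ?_⟩
      by_contra hlt
      exact h2 ⟨A, S, B, h, by omega⟩
  obtain ⟨x, hx⟩ := hx
  have hpos : 0 < G.degree x := by have := hδ x; omega
  obtain ⟨y, hy⟩ := (G.degree_pos_iff_exists_adj x).1 hpos
  exact ⟨x, y, hy, fun A S B h hxS _ => hx A S B h hxS⟩

theorem sepn_of_kconn {V : Type*} [Fintype V] [DecidableEq V] {G : SimpleGraph V} {k : ℕ}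
    (hG : KConnected G k) : ∀ A S B, Sepn G A S B → k ≤ S.card := by
  intro A S B h
  by_contra hlt
  have hcon := (hG.2 S (by omega)).preconnected
  obtain ⟨a, ha⟩ := h.nA
  obtain ⟨b, hb⟩ := h.nB
  have key : ∀ u v : ((S : Set V)ᶜ : Set V), (G.induce ((S : Set V)ᶜ)).Reachable u v →
      u.1 ∈ A → v.1 ∈ A := by
    rintro u v ⟨p⟩
    induction p with
    | nil => exact id
    | @cons u v w huv p ih =>
      intro hu
      apply ih
      rcases h.cov v.1 with hh | hh | hh
      · exact hh
      · exact absurd hh v.2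
      · exact absurd huv (h.nadj _ hu _ hh)
  have := key ⟨a, by simpa using h.dAS a ha⟩
    ⟨b, by simpa using fun hs => h.dSB b hs hb⟩ (hcon _ _) ha
  exact h.dAB b this hb

/-- Every `k`-connected graph `G` with `δ(G) ≥ ⌊3k/2⌋ + 2` has an edge `xy`
such that `G - {x, y}` is still `k`-connected. -/
theorem stmt_9 {V : Type*} [Fintype V] [DecidableEq V] (G : SimpleGraph V)
    [DecidableRel G.Adj] (k : ℕ) (hk : 0 < k)
    (hG : KConnected G k)
    (hδ : ∀ v : V, 3 * k / 2 + 2 ≤ G.degree v) :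
    ∃ x y : V, G.Adj x y ∧ KConnected (G.induce (({x, y} : Set V)ᶜ)) k := by
  classical
  have hne : Nonempty V := by
    have := hG.1
    exact (Nat.card_pos_iff.1 (by omega)).1
  obtain ⟨x, y, hxy, hS⟩ := edgeExists hδ (sepn_of_kconn hG)
  have hcardV : k + 3 ≤ Fintype.card V := by
    have h1 := hδ x
    have h2 := G.degree_lt_card_verts x
    omega
  have hcW : Nat.card (({x, y} : Set V)ᶜ : Set V) + 2 = Fintype.card V := by
    have h1 := Set.ncard_add_ncard_compl ({x, y} : Set V)
    rw [Set.ncard_pair hxy.ne, Nat.card_eq_fintype_card] at h1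
    rw [Nat.card_coe_set_eq]
    omega
  refine ⟨x, y, hxy, by omega, ?_⟩
  intro X hX
  by_contra hcon
  have hneX : Nonempty ((X : Set (({x, y} : Set V)ᶜ : Set V))ᶜ :
      Set (({x, y} : Set V)ᶜ : Set V)) := by
    by_contra hemp
    rw [Set.nonempty_coe_sort, Set.not_nonempty_iff_eq_empty, Set.compl_empty_iff] at hemp
    have h1 : X = Finset.univ := by
      ext v; simpa using (Set.ext_iff.1 hemp v)
    rw [h1, Finset.card_univ, ← Nat.card_eq_fintype_card] at hX
    omega
  set H := (G.induce (({x, y} : Set V)ᶜ)).induce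
    ((X : Set (({x, y} : Set V)ᶜ : Set V))ᶜ) with hH
  have hnp : ¬ H.Preconnected := fun hp => hcon ⟨hp⟩
  unfold SimpleGraph.Preconnected at hnp
  push Not at hnp
  obtain ⟨u, v, huv⟩ := hnp
  let f : ((X : Set (({x, y} : Set V)ᶜ : Set V))ᶜ : Set (({x, y} : Set V)ᶜ : Set V)) → V :=
    fun w => w.1.1
  have hf : Function.Injective f := fun a b hab => Subtype.ext (Subtype.ext hab)
  let A : Finset V := (Finset.univ.filter fun w => H.Reachable u w).image f
  let B : Finset V := (Finset.univ.filter fun w => ¬ H.Reachable u w).image f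
  let S : Finset V := insert x (insert y (X.image Subtype.val))
  have hfS : ∀ w, f w ∉ S := by
    intro w hw
    have h1 := w.1.2
    have h2 := w.2
    simp only [S, Finset.mem_insert, Finset.mem_image] at hw
    rcases hw with hw | hw | ⟨z, hz, hzw⟩
    · exact h1 (by simp [← hw, f])
    · exact h1 (by simp [← hw, f])
    · have : z = w.1 := Subtype.ext hzw
      exact h2 (by simpa [← this] using hz)
  have hsep : Sepn G A S B := by
    refine ⟨⟨f u, Finset.mem_image.2 ⟨u, by simp, rfl⟩⟩,
      ⟨f v, Finset.mem_image.2 ⟨v, by simpa using huv, rfl⟩⟩, ?_, ?_, ?_, ?_, ?_⟩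
    · intro w
      by_cases hw : w ∈ S
      · exact Or.inr (Or.inl hw)
      have h1 : w ∈ (({x, y} : Set V)ᶜ : Set V) := by
        simp only [S, Finset.mem_insert, not_or] at hw
        simp [hw.1, hw.2.1]
      have h2 : (⟨w, h1⟩ : (({x, y} : Set V)ᶜ : Set V)) ∈
          ((X : Set (({x, y} : Set V)ᶜ : Set V))ᶜ) := by
        intro hX
        exact hw (by
          simp only [S, Finset.mem_insert, Finset.mem_image]
          exact Or.inr (Or.inr ⟨_, hX, rfl⟩))
      by_cases hr : H.Reachable u ⟨⟨w, h1⟩, h2⟩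
      · exact Or.inl (Finset.mem_image.2 ⟨⟨⟨w, h1⟩, h2⟩, by simpa using hr, rfl⟩)
      · exact Or.inr (Or.inr (Finset.mem_image.2 ⟨⟨⟨w, h1⟩, h2⟩, by simpa using hr, rfl⟩))
    · intro w hw
      obtain ⟨z, -, rfl⟩ := Finset.mem_image.1 hw
      exact hfS z
    · intro w hw hw'
      obtain ⟨z, hz, rfl⟩ := Finset.mem_image.1 hw
      obtain ⟨z', hz', he⟩ := Finset.mem_image.1 hw'
      rw [hf he] at hz'
      exact (Finset.mem_filter.1 hz').2 (Finset.mem_filter.1 hz).2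
    · intro w hw hw'
      obtain ⟨z, -, rfl⟩ := Finset.mem_image.1 hw'
      exact hfS z hw
    · intro a ha b hb hab
      obtain ⟨z, hz, rfl⟩ := Finset.mem_image.1 ha
      obtain ⟨z', hz', rfl⟩ := Finset.mem_image.1 hb
      have hadj : H.Adj z z' := hab
      exact (Finset.mem_filter.1 hz').2 ((Finset.mem_filter.1 hz).2.trans hadj.reachable)
  have h1 := hS A S B hsep (by simp [S]) (by simp [S])
  have h2 : S.card ≤ X.card + 2 := by
    simp only [S]
    have e1 := Finset.card_insert_le x (insert y (X.image Subtype.val))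
    have e2 := Finset.card_insert_le y (X.image Subtype.val)
    have e3 := Finset.card_image_le (s := X) (f := Subtype.val)
    omega
  omega
end
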